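/- Let λ0 ∈ ℝ, let g be an exchangeable prior, and let d be a pseudo symmetric design with c_{d22} > 0, q_d(x_d) > 0 and q_d(λ0) > 0. Then d is D_{g,λ0}-optimal if and only if max_{s∈S} [ (1/(t−1)) q_s(x_d)/q_d(x_d) + ((t−2)/(t−1)) q_s(λ0)/q_d(λ0) ] = 1. Moreover, in that case every sequence s with p_s > 0 attains this maximum. -/

import Mathlib

open Matrix MeasureTheory
open scoped Classical

noncomputable section

/-- A treatment sequence: assigns a treatment in `Fin t` to each period in `Fin p`. -/
abbrev TrtSeq (p t : ℕ) := Fin p → Fin t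

/-- Treatment/period incidence matrix `T_s`. -/
def Tmat {p t : ℕ} (s : TrtSeq p t) : Matrix (Fin p) (Fin t) ℝ :=
  Matrix.of fun k i => if s k = i then 1 else 0

/-- Carryover incidence matrix `F_s`: first row zero, row `k` records the treatment
in period `k-1`. -/
def Fmat {p t : ℕ} (s : TrtSeq p t) : Matrix (Fin p) (Fin t) ℝ :=
  Matrix.of fun k i =>
    if (k : ℕ) = 0 then 0
    else if s ⟨(k : ℕ) - 1, Nat.lt_of_le_of_lt (Nat.sub_le _ _) k.isLt⟩ = i then 1 else 0

/-- The all-ones `m × m` matrix `J_m`. -/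
def Jmat (m : ℕ) : Matrix (Fin m) (Fin m) ℝ := Matrix.of fun _ _ => 1

/-- `B_t = I_t - J_t / t`. -/
def Bmat (t : ℕ) : Matrix (Fin t) (Fin t) ℝ := 1 - ((t : ℝ))⁻¹ • Jmat t

/-- `B̃ = Σ⁻¹ - Σ⁻¹ J_p Σ⁻¹ / (1_p' Σ⁻¹ 1_p)`. -/
def Btil {p : ℕ} (S : Matrix (Fin p) (Fin p) ℝ) : Matrix (Fin p) (Fin p) ℝ :=
  S⁻¹ - (((fun _ => (1 : ℝ)) : Fin p → ℝ) ⬝ᵥ (S⁻¹ *ᵥ fun _ => (1 : ℝ)))⁻¹ •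
    (S⁻¹ * Jmat p * S⁻¹)

/-- `G_1(s) = T_s`, `G_2(s) = F_s`. -/
def Gmat {p t : ℕ} (i : Fin 2) (s : TrtSeq p t) : Matrix (Fin p) (Fin t) ℝ :=
  if i = 0 then Tmat s else Fmat s

/-- An approximate design: nonnegative weights summing to one. -/
def IsDesign {p t : ℕ} (w : TrtSeq p t → ℝ) : Prop :=
  (∀ s, 0 ≤ w s) ∧ ∑ s : TrtSeq p t, w s = 1

/-- `Ĉ_{sij} = B_t G_i(s)' B̃ G_j(s) B_t`. -/
def Chat {p t : ℕ} (S : Matrix (Fin p) (Fin p) ℝ) (s : TrtSeq p t) (i j : Fin 2) :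
    Matrix (Fin t) (Fin t) ℝ :=
  Bmat t * (Gmat i s)ᵀ * Btil S * Gmat j s * Bmat t

/-- `c_{sij} = tr Ĉ_{sij}`. -/
def cseq {p t : ℕ} (S : Matrix (Fin p) (Fin p) ℝ) (s : TrtSeq p t) (i j : Fin 2) : ℝ :=
  (Chat S s i j).trace

/-- `Ĉ_{dij} = n ∑_s p_s Ĉ_{sij}`. -/
def ChatD {p t : ℕ} (n : ℕ) (S : Matrix (Fin p) (Fin p) ℝ) (w : TrtSeq p t → ℝ)
    (i j : Fin 2) : Matrix (Fin t) (Fin t) ℝ :=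
  (n : ℝ) • ∑ s : TrtSeq p t, w s • Chat S s i j

/-- `C_{dij} = Ĉ_{dij} - n (∑_s p_s G_i(s) B_t)' B̃ (∑_s p_s G_j(s) B_t)`. -/
def CD {p t : ℕ} (n : ℕ) (S : Matrix (Fin p) (Fin p) ℝ) (w : TrtSeq p t → ℝ)
    (i j : Fin 2) : Matrix (Fin t) (Fin t) ℝ :=
  ChatD n S w i j -
    (n : ℝ) • ((∑ s : TrtSeq p t, w s • (Gmat i s * Bmat t))ᵀ * Btil S *
      (∑ s : TrtSeq p t, w s • (Gmat j s * Bmat t)))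

/-- `c_{dij} = tr Ĉ_{dij} = n ∑_s p_s c_{sij}`. -/
def cD {p t : ℕ} (n : ℕ) (S : Matrix (Fin p) (Fin p) ℝ) (w : TrtSeq p t → ℝ)
    (i j : Fin 2) : ℝ :=
  (ChatD n S w i j).trace

/-- Fisher information matrix `C_{d,τ0,λ0}` for the direct treatment effects under the
proportional model. -/
def CInfo {p t : ℕ} (n : ℕ) (S : Matrix (Fin p) (Fin p) ℝ) (w : TrtSeq p t → ℝ)
    (τ0 : Fin t → ℝ) (l0 : ℝ) : Matrix (Fin t) (Fin t) ℝ :=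
  CD n S w 0 0 + l0 • (CD n S w 0 1 + CD n S w 1 0) + (l0 ^ 2) • CD n S w 1 1 -
    (τ0 ⬝ᵥ (CD n S w 1 1 *ᵥ τ0))⁻¹ •
      ((CD n S w 0 1 + l0 • CD n S w 1 1) * vecMulVec τ0 τ0 *
        (CD n S w 1 0 + l0 • CD n S w 1 1))

/-- Permutation matrix `S_σ` with `(S_σ)_{j,i} = 1` iff `i = σ j`. -/
def Smat {t : ℕ} (σ : Equiv.Perm (Fin t)) : Matrix (Fin t) (Fin t) ℝ :=
  Matrix.of fun j i => if i = σ j then 1 else 0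

/-- The relabelled sequence `σ ∘ s`. -/
def permSeq {p t : ℕ} (σ : Equiv.Perm (Fin t)) (s : TrtSeq p t) : TrtSeq p t := fun k => σ (s k)

/-- The design `σ d`, with weights `(σd)_s = p_{σ⁻¹ ∘ s}`. -/
def permDesign {p t : ℕ} (σ : Equiv.Perm (Fin t)) (w : TrtSeq p t → ℝ) : TrtSeq p t → ℝ :=
  fun s => w (permSeq σ⁻¹ s)

/-- A design is symmetric if its weights are invariant under treatment relabelling. -/
def IsSymmetricDesign {p t : ℕ} (w : TrtSeq p t → ℝ) : Prop :=
  ∀ (σ : Equiv.Perm (Fin t)) (s : TrtSeq p t), w (permSeq σ s) = w s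

/-- The symmetrized design `d*` with weights `p*_s = (1/t!) ∑_σ p_{σ⁻¹ ∘ s}`. -/
def symmetrize {p t : ℕ} (w : TrtSeq p t → ℝ) : TrtSeq p t → ℝ :=
  fun s => ((Nat.factorial t : ℝ))⁻¹ * ∑ σ : Equiv.Perm (Fin t), permDesign σ w s

/-- `q_s(x) = c_{s11} + 2 c_{s12} x + c_{s22} x²`. -/
def qSeq {p t : ℕ} (S : Matrix (Fin p) (Fin p) ℝ) (s : TrtSeq p t) (x : ℝ) : ℝ :=
  cseq S s 0 0 + 2 * cseq S s 0 1 * x + cseq S s 1 1 * x ^ 2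

/-- `q(x) = max_{s ∈ S} q_s(x)`. -/
def qMax (p t : ℕ) (S : Matrix (Fin p) (Fin p) ℝ) (x : ℝ) : ℝ :=
  sSup (Set.range fun s : TrtSeq p t => qSeq S s x)

/-- `y* = inf_x q(x)`. -/
def yStar (p t : ℕ) (S : Matrix (Fin p) (Fin p) ℝ) : ℝ := ⨅ x : ℝ, qMax p t S x

/-- `q_d(x) = ∑_s p_s q_s(x)`. -/
def qD {p t : ℕ} (S : Matrix (Fin p) (Fin p) ℝ) (w : TrtSeq p t → ℝ) (x : ℝ) : ℝ :=
  ∑ s : TrtSeq p t, w s * qSeq S s x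

/-- `x_d = -c_{d12}/c_{d22}`. -/
def xD {p t : ℕ} (n : ℕ) (S : Matrix (Fin p) (Fin p) ℝ) (w : TrtSeq p t → ℝ) : ℝ :=
  -(cD n S w 0 1) / cD n S w 1 1

/-- An exchangeable prior: a probability measure on `{τ : 1'τ = 0, τ ≠ 0}` that is
invariant under all coordinate permutations of `ℝ^t`. -/
def IsExchangeablePrior {t : ℕ} (g : Measure (Fin t → ℝ)) : Prop :=
  IsProbabilityMeasure g ∧
    g {τ : Fin t → ℝ | ¬((∑ i, τ i) = 0 ∧ τ ≠ 0)} = 0 ∧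
    ∀ σ : Equiv.Perm (Fin t), Measure.map (fun τ i => τ (σ i)) g = g

/-- `m_d(τ0) = min {ℓ' C_{d,τ0,λ0} ℓ : 1'ℓ = 0, ℓ'ℓ = 1}`. -/
def mD {p t : ℕ} (n : ℕ) (S : Matrix (Fin p) (Fin p) ℝ) (w : TrtSeq p t → ℝ) (l0 : ℝ)
    (τ0 : Fin t → ℝ) : ℝ :=
  sInf {v : ℝ | ∃ l : Fin t → ℝ, (∑ i, l i) = 0 ∧ l ⬝ᵥ l = 1 ∧
    v = l ⬝ᵥ (CInfo n S w τ0 l0 *ᵥ l)}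

/-- The E-criterion value `E_{g,λ0}(d) = ∫ m_d(τ0) g(dτ0)`. -/
def Ecrit {p t : ℕ} (n : ℕ) (S : Matrix (Fin p) (Fin p) ℝ) (g : Measure (Fin t → ℝ))
    (l0 : ℝ) (w : TrtSeq p t → ℝ) : ℝ :=
  ∫ τ0, mD n S w l0 τ0 ∂g

/-- Competing designs for E-optimality: designs with a.e. positive `τ0' C_{d22} τ0`
and `g`-integrable `m_d`. -/
def EAdmissible {p t : ℕ} (n : ℕ) (S : Matrix (Fin p) (Fin p) ℝ) (g : Measure (Fin t → ℝ))
    (l0 : ℝ) (w : TrtSeq p t → ℝ) : Prop :=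
  IsDesign w ∧ (∀ᵐ τ0 ∂g, 0 < τ0 ⬝ᵥ (CD n S w 1 1 *ᵥ τ0)) ∧
    Integrable (mD n S w l0) g

/-- `d` is `E_{g,λ0}`-optimal. -/
def EOptimal {p t : ℕ} (n : ℕ) (S : Matrix (Fin p) (Fin p) ℝ) (g : Measure (Fin t → ℝ))
    (l0 : ℝ) (w : TrtSeq p t → ℝ) : Prop :=
  ∀ w' : TrtSeq p t → ℝ, EAdmissible n S g l0 w' → Ecrit n S g l0 w' ≤ Ecrit n S g l0 w

/-- A pseudo symmetric design: treatments equireplicated in each period,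
and all `C_{dij}` completely symmetric. -/
def IsPseudoSymmetric {p t : ℕ} (n : ℕ) (S : Matrix (Fin p) (Fin p) ℝ)
    (w : TrtSeq p t → ℝ) : Prop :=
  (∀ (k : Fin p) (i : Fin t),
    (∑ s ∈ Finset.univ.filter fun s : TrtSeq p t => s k = i, w s) = 1 / (t : ℝ)) ∧
  ∀ i j : Fin 2, ∃ a b : ℝ, CD n S w i j = a • (1 : Matrix (Fin t) (Fin t) ℝ) + b • Jmat t

/-- Eigenvalues of a (Hermitian) matrix sorted increasingly with multiplicity. -/
def sortedEigs {t : ℕ} (C : Matrix (Fin t) (Fin t) ℝ) : Fin t → ℝ :=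
  if h : C.IsHermitian then (fun i => h.eigenvalues (Tuple.sort h.eigenvalues i))
  else fun _ => 0

/-- `Φ_D(C) = (∏_{i=1}^{t-1} a_i)^{1/(t-1)}` (eigenvalues sorted increasingly). -/
def PhiD {t : ℕ} (C : Matrix (Fin t) (Fin t) ℝ) : ℝ :=
  (∏ i ∈ Finset.univ.filter fun i : Fin t => (i : ℕ) ≠ 0, sortedEigs C i) ^ (((t : ℝ) - 1)⁻¹)

/-- `Φ_A(C) = (t-1)(∑_{i=1}^{t-1} a_i⁻¹)⁻¹` if `a_1 > 0`, else `0`. -/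
def PhiA {t : ℕ} (C : Matrix (Fin t) (Fin t) ℝ) : ℝ :=
  if ∀ i : Fin t, (i : ℕ) ≠ 0 → 0 < sortedEigs C i then
    ((t : ℝ) - 1) *
      (∑ i ∈ Finset.univ.filter fun i : Fin t => (i : ℕ) ≠ 0, (sortedEigs C i)⁻¹)⁻¹
  else 0

/-- `Φ_T(C) = tr(C)/(t-1)`. -/
def PhiT {t : ℕ} (C : Matrix (Fin t) (Fin t) ℝ) : ℝ := C.trace / ((t : ℝ) - 1)

/-- The criterion value `∫ Φ(C_{d,τ0,λ0}) g(dτ0)`. -/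
def PhiCrit {p t : ℕ} (n : ℕ) (S : Matrix (Fin p) (Fin p) ℝ)
    (Phi : Matrix (Fin t) (Fin t) ℝ → ℝ) (g : Measure (Fin t → ℝ)) (l0 : ℝ)
    (w : TrtSeq p t → ℝ) : ℝ :=
  ∫ τ0, Phi (CInfo n S w τ0 l0) ∂g

/-- Competing designs for a `Φ`-criterion. -/
def PhiAdmissible {p t : ℕ} (n : ℕ) (S : Matrix (Fin p) (Fin p) ℝ)
    (Phi : Matrix (Fin t) (Fin t) ℝ → ℝ) (g : Measure (Fin t → ℝ)) (l0 : ℝ)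
    (w : TrtSeq p t → ℝ) : Prop :=
  IsDesign w ∧ (∀ᵐ τ0 ∂g, 0 < τ0 ⬝ᵥ (CD n S w 1 1 *ᵥ τ0)) ∧
    Integrable (fun τ0 => Phi (CInfo n S w τ0 l0)) g

/-- `d` is `Φ_{g,λ0}`-optimal. -/
def PhiOptimal {p t : ℕ} (n : ℕ) (S : Matrix (Fin p) (Fin p) ℝ)
    (Phi : Matrix (Fin t) (Fin t) ℝ → ℝ) (g : Measure (Fin t → ℝ)) (l0 : ℝ)
    (w : TrtSeq p t → ℝ) : Prop :=
  ∀ w' : TrtSeq p t → ℝ, PhiAdmissible n S Phi g l0 w' →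
    PhiCrit n S Phi g l0 w' ≤ PhiCrit n S Phi g l0 w

/-- `H_1(s) = F_s`, `H_2(s) = T_s + λ0 F_s` (for estimating `λ`). -/
def Hmat {p t : ℕ} (l0 : ℝ) (i : Fin 2) (s : TrtSeq p t) : Matrix (Fin p) (Fin t) ℝ :=
  if i = 0 then Fmat s else Tmat s + l0 • Fmat s

/-- `Â_{sij} = B_t H_i(s)' B̃ H_j(s) B_t`. -/
def Ahat {p t : ℕ} (S : Matrix (Fin p) (Fin p) ℝ) (l0 : ℝ) (s : TrtSeq p t) (i j : Fin 2) :
    Matrix (Fin t) (Fin t) ℝ :=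
  Bmat t * (Hmat l0 i s)ᵀ * Btil S * Hmat l0 j s * Bmat t

/-- `h_{sij} = tr Â_{sij}`. -/
def hseq {p t : ℕ} (S : Matrix (Fin p) (Fin p) ℝ) (l0 : ℝ) (s : TrtSeq p t) (i j : Fin 2) : ℝ :=
  (Ahat S l0 s i j).trace

/-- `Â_{dij} = n ∑_s p_s Â_{sij}`. -/
def AhatD {p t : ℕ} (n : ℕ) (S : Matrix (Fin p) (Fin p) ℝ) (l0 : ℝ) (w : TrtSeq p t → ℝ)
    (i j : Fin 2) : Matrix (Fin t) (Fin t) ℝ :=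
  (n : ℝ) • ∑ s : TrtSeq p t, w s • Ahat S l0 s i j

/-- `A_{dij} = Â_{dij} - n (∑_s p_s H_i(s) B_t)' B̃ (∑_s p_s H_j(s) B_t)`. -/
def AD {p t : ℕ} (n : ℕ) (S : Matrix (Fin p) (Fin p) ℝ) (l0 : ℝ) (w : TrtSeq p t → ℝ)
    (i j : Fin 2) : Matrix (Fin t) (Fin t) ℝ :=
  AhatD n S l0 w i j -
    (n : ℝ) • ((∑ s : TrtSeq p t, w s • (Hmat l0 i s * Bmat t))ᵀ * Btil S *
      (∑ s : TrtSeq p t, w s • (Hmat l0 j s * Bmat t)))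

/-- `G` is a generalized inverse of `A`. -/
def IsGInv {t : ℕ} (A G : Matrix (Fin t) (Fin t) ℝ) : Prop := A * G * A = A

/-- `A_d(G) = A_{d11} - A_{d12} G A_{d21}` with `A_{d21} = A_{d12}'`. -/
def ADfun {p t : ℕ} (n : ℕ) (S : Matrix (Fin p) (Fin p) ℝ) (l0 : ℝ) (w : TrtSeq p t → ℝ)
    (G : Matrix (Fin t) (Fin t) ℝ) : Matrix (Fin t) (Fin t) ℝ :=
  AD n S l0 w 0 0 - AD n S l0 w 0 1 * G * (AD n S l0 w 0 1)ᵀ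

/-- `r_s(x) = h_{s11} + 2 h_{s12} x + h_{s22} x²`. -/
def rSeq {p t : ℕ} (S : Matrix (Fin p) (Fin p) ℝ) (l0 : ℝ) (s : TrtSeq p t) (x : ℝ) : ℝ :=
  hseq S l0 s 0 0 + 2 * hseq S l0 s 0 1 * x + hseq S l0 s 1 1 * x ^ 2

/-- `r(x) = max_s r_s(x)`. -/
def rMax (p t : ℕ) (S : Matrix (Fin p) (Fin p) ℝ) (l0 : ℝ) (x : ℝ) : ℝ :=
  sSup (Set.range fun s : TrtSeq p t => rSeq S l0 s x)

/-- `y_0 = inf_x r(x)`. -/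
def yZero (p t : ℕ) (S : Matrix (Fin p) (Fin p) ℝ) (l0 : ℝ) : ℝ := ⨅ x : ℝ, rMax p t S l0 x


lemma Jmat_eq (m : ℕ) : Jmat m = vecMulVec (fun _ => (1:ℝ)) (fun _ => (1:ℝ)) := by
  ext i j; simp [Jmat, vecMulVec_apply]

lemma det_one_add_smul_vecMulVec {m : ℕ} (c : ℝ) (u v : Fin m → ℝ) :
    (1 + c • vecMulVec u v).det = 1 + c * (v ⬝ᵥ u) := by
  have h := Matrix.det_one_add_replicateCol_mul_replicateRow (ι := Unit) (c • u) v
  rw [← Matrix.vecMulVec_eq Unit] at h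
  rw [← smul_vecMulVec, h, dotProduct_smul, smul_eq_mul]

lemma mul_Jmat_of {t : ℕ} {C : Matrix (Fin t) (Fin t) ℝ} (h : C *ᵥ (fun _ => 1) = 0) :
    C * Jmat t = 0 := by
  rw [Jmat_eq, mul_vecMulVec, h, zero_vecMulVec]

lemma det_add_smul_one {t : ℕ} {C : Matrix (Fin t) (Fin t) ℝ} (hC : C.IsHermitian) (x : ℝ) :
    (C + x • (1 : Matrix (Fin t) (Fin t) ℝ)).det = ∏ i, (hC.eigenvalues i + x) := by
  have h1 := congrArg (Polynomial.eval (-x)) hC.charpoly_eq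
  rw [Matrix.eval_charpoly, Polynomial.eval_prod] at h1
  simp only [Polynomial.eval_sub, Polynomial.eval_X, Polynomial.eval_C] at h1
  have h2 : C + x • (1 : Matrix (Fin t) (Fin t) ℝ) = -(Matrix.scalar (Fin t) (-x) - C) := by
    rw [Matrix.scalar_apply, ← Matrix.smul_one_eq_diagonal, neg_smul]; abel
  rw [h2, Matrix.det_neg, h1]
  have h3 : ∀ i, hC.eigenvalues i + x = -(-x - hC.eigenvalues i) := fun i => by ring
  simp only [h3]
  rw [Finset.prod_neg]
  simp

lemma sortedEigs_props {t : ℕ} (ht : 1 ≤ t) {C : Matrix (Fin t) (Fin t) ℝ} (hC : C.PosSemidef)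
    (h1 : C *ᵥ (fun _ => 1) = 0) :
    (∀ i, 0 ≤ sortedEigs C i) ∧
    (∑ i ∈ Finset.univ.filter (fun i : Fin t => (i : ℕ) ≠ 0), sortedEigs C i) = C.trace ∧
    (∏ i ∈ Finset.univ.filter (fun i : Fin t => (i : ℕ) ≠ 0), sortedEigs C i) =
      (C + (t : ℝ)⁻¹ • Jmat t).det := by
  obtain ⟨m, rfl⟩ : ∃ m, t = m + 1 := ⟨t - 1, by omega⟩
  have hH := hC.isHermitian
  have hs : sortedEigs C = fun i => hH.eigenvalues (Tuple.sort hH.eigenvalues i) := by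
    rw [sortedEigs, dif_pos hH]
  have hnn : ∀ i, 0 ≤ sortedEigs C i := by
    intro i; rw [hs]; exact hC.eigenvalues_nonneg _
  have hfil : (Finset.univ.filter (fun i : Fin (m+1) => (i : ℕ) ≠ 0)) = Finset.univ.erase 0 := by
    ext i; simp
  have hmono : Monotone (sortedEigs C) := by
    rw [hs]; exact Tuple.monotone_sort hH.eigenvalues
  have hdet : ∀ x : ℝ, (C + x • (1 : Matrix _ _ ℝ)).det = ∏ i, (sortedEigs C i + x) := by
    intro x
    rw [det_add_smul_one hH, hs]
    exact (Equiv.prod_comp (Tuple.sort hH.eigenvalues) (fun i => hH.eigenvalues i + x)).symm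
  have hz : sortedEigs C 0 = 0 := by
    have h0 : ∏ i, sortedEigs C i = 0 := by
      have := hdet 0
      simp only [zero_smul, add_zero] at this
      rw [← this]
      rw [← Matrix.exists_mulVec_eq_zero_iff]
      refine ⟨fun _ => 1, ?_, h1⟩
      intro h; have := congrFun h 0; simp at this
    obtain ⟨i, -, hi⟩ := Finset.prod_eq_zero_iff.1 h0
    exact le_antisymm (hi ▸ hmono (Fin.zero_le i)) (hnn 0)
  have hprodx : ∀ x : ℝ, ∏ i, (sortedEigs C i + x) =
      x * ∏ i ∈ Finset.univ.erase 0, (sortedEigs C i + x) := by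
    intro x
    rw [← Finset.mul_prod_erase _ _ (Finset.mem_univ (0 : Fin (m+1))), hz, zero_add]
  refine ⟨hnn, ?_, ?_⟩
  · rw [hfil]
    have ht := hH.trace_eq_sum_eigenvalues
    simp only [RCLike.ofReal_real_eq_id, id] at ht
    rw [ht, ← Equiv.sum_comp (Tuple.sort hH.eigenvalues) hH.eigenvalues]
    have : ∑ i, sortedEigs C i = sortedEigs C 0 + ∑ i ∈ Finset.univ.erase 0, sortedEigs C i :=
      (Finset.add_sum_erase _ _ (Finset.mem_univ _)).symm
    rw [hz, zero_add] at this
    rw [← this, hs]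
  · rw [hfil]
    have key : ∀ x : ℝ, x ≠ 0 →
        (C + x • (1 : Matrix _ _ ℝ) + ((m+1 : ℕ) : ℝ)⁻¹ • Jmat (m+1)).det =
        (x + 1) * ∏ i ∈ Finset.univ.erase 0, (sortedEigs C i + x) := by
      intro x hx
      have hfac : C + x • (1 : Matrix _ _ ℝ) + ((m+1 : ℕ) : ℝ)⁻¹ • Jmat (m+1) =
          (C + x • (1 : Matrix _ _ ℝ)) * (1 + (x⁻¹ * ((m+1 : ℕ) : ℝ)⁻¹) • Jmat (m+1)) := by
        rw [mul_add, mul_one, add_mul, mul_smul_comm, mul_Jmat_of h1, smul_zero, zero_add,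
          smul_mul_assoc, one_mul, smul_smul, mul_inv_cancel_left₀ hx]
      rw [hfac, Matrix.det_mul, hdet, hprodx, Jmat_eq, det_one_add_smul_vecMulVec]
      have : ((m+1 : ℕ) : ℝ) ≠ 0 := by positivity
      have h2 : (fun _ : Fin (m+1) => (1:ℝ)) ⬝ᵥ (fun _ => 1) = ((m+1 : ℕ) : ℝ) := by
        simp [dotProduct]
      rw [h2]
      field_simp
    have hc1 : Continuous fun x : ℝ =>
        (C + x • (1 : Matrix _ _ ℝ) + ((m+1 : ℕ) : ℝ)⁻¹ • Jmat (m+1)).det := by fun_prop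
    have hc2 : Continuous fun x : ℝ =>
        (x + 1) * ∏ i ∈ Finset.univ.erase 0, (sortedEigs C i + x) := by fun_prop
    have heq := Continuous.ext_on (s := {x : ℝ | x ≠ 0}) (dense_compl_singleton (0:ℝ)) hc1 hc2
      (fun x hx => key x hx)
    have := congrFun heq 0
    simp only [zero_smul, add_zero, zero_add, one_mul] at this
    exact this.symm

lemma PhiD_eq {t : ℕ} (ht : 1 ≤ t) {C : Matrix (Fin t) (Fin t) ℝ} (hC : C.PosSemidef)
    (h1 : C *ᵥ (fun _ => 1) = 0) :
    PhiD C = ((C + (t : ℝ)⁻¹ • Jmat t).det) ^ (((t : ℝ) - 1)⁻¹) := by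
  rw [PhiD, (sortedEigs_props ht hC h1).2.2]

lemma det_nonneg_aux {t : ℕ} (ht : 1 ≤ t) {C : Matrix (Fin t) (Fin t) ℝ} (hC : C.PosSemidef)
    (h1 : C *ᵥ (fun _ => 1) = 0) : 0 ≤ (C + (t : ℝ)⁻¹ • Jmat t).det := by
  rw [← (sortedEigs_props ht hC h1).2.2]
  exact Finset.prod_nonneg fun i _ => (sortedEigs_props ht hC h1).1 i

/-- AM-GM for the D-criterion. -/
lemma PhiD_le_trace {t : ℕ} (ht : 2 ≤ t) {C : Matrix (Fin t) (Fin t) ℝ} (hC : C.PosSemidef)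
    (h1 : C *ᵥ (fun _ => 1) = 0) : PhiD C ≤ C.trace / ((t : ℝ) - 1) := by
  obtain ⟨hnn, hsum, hprod⟩ := sortedEigs_props (by omega) hC h1
  have htp : (0:ℝ) < (t:ℝ) - 1 := by
    have : (2:ℝ) ≤ t := by exact_mod_cast ht
    linarith
  have hcard : ((Finset.univ.filter (fun i : Fin t => (i : ℕ) ≠ 0)).card : ℝ) = (t:ℝ) - 1 := by
    obtain ⟨m, rfl⟩ : ∃ m, t = m + 1 := ⟨t - 1, by omega⟩
    have hfil : (Finset.univ.filter (fun i : Fin (m+1) => (i : ℕ) ≠ 0)) = Finset.univ.erase 0 := by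
      ext i; simp
    rw [hfil, Finset.card_erase_of_mem (Finset.mem_univ _)]
    simp
  have := Real.geom_mean_le_arith_mean_weighted
    (Finset.univ.filter (fun i : Fin t => (i : ℕ) ≠ 0)) (fun _ => ((t:ℝ) - 1)⁻¹)
    (sortedEigs C) (fun _ _ => by positivity)
    (by rw [Finset.sum_const, nsmul_eq_mul, hcard, mul_inv_cancel₀ htp.ne'])
    (fun i _ => hnn i)
  rw [← Finset.mul_sum, hsum, Real.finsetProd_rpow _ _ (fun i _ => hnn i)] at this
  rw [PhiD, div_eq_inv_mul]
  exact this

/-- Auxiliary matrix with eigenvalue `1` on `1`, `b` on `τ`, and `a` on the rest. -/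
def Rm {t : ℕ} (τ : Fin t → ℝ) (a b : ℝ) : Matrix (Fin t) (Fin t) ℝ :=
  a • (1 : Matrix (Fin t) (Fin t) ℝ) + ((1 - a) * (t:ℝ)⁻¹) • Jmat t +
    ((b - a) * (τ ⬝ᵥ τ)⁻¹) • vecMulVec τ τ

lemma dot_self_pos {t : ℕ} {τ : Fin t → ℝ} (h : τ ≠ 0) : 0 < τ ⬝ᵥ τ := by
  have h2 : 0 ≤ τ ⬝ᵥ τ := by
    simp only [dotProduct]; exact Finset.sum_nonneg fun i _ => mul_self_nonneg _
  refine lt_of_le_of_ne h2 fun h3 => h (dotProduct_self_eq_zero.1 h3.symm)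

lemma JJ {t : ℕ} : Jmat t * Jmat t = (t : ℝ) • Jmat t := by
  ext i j; simp [Jmat, Matrix.mul_apply]

lemma J_mulVec {t : ℕ} {τ : Fin t → ℝ} (h : ∑ i, τ i = 0) : Jmat t *ᵥ τ = 0 := by
  ext i; simp [Jmat, mulVec, dotProduct, h]

lemma vecMul_J {t : ℕ} {τ : Fin t → ℝ} (h : ∑ i, τ i = 0) : τ ᵥ* Jmat t = 0 := by
  ext i; simp [Jmat, vecMul, dotProduct, h]

lemma Jmat_transpose (t : ℕ) : (Jmat t)ᵀ = Jmat t := by ext i j; simp [Jmat]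

lemma VV {t : ℕ} (τ : Fin t → ℝ) :
    vecMulVec τ τ * vecMulVec τ τ = (τ ⬝ᵥ τ) • vecMulVec τ τ := by
  rw [vecMulVec_mul_vecMulVec]
  ext i j; simp [vecMulVec_apply]; ring

lemma Rm_transpose {t : ℕ} (τ : Fin t → ℝ) (a b : ℝ) : (Rm τ a b)ᵀ = Rm τ a b := by
  simp [Rm, Jmat_transpose, transpose_vecMulVec]

lemma Rm_mul {t : ℕ} (ht : 1 ≤ t) {τ : Fin t → ℝ} (h0 : ∑ i, τ i = 0) (h1 : τ ≠ 0)
    (a b c d : ℝ) : Rm τ a b * Rm τ c d = Rm τ (a * c) (b * d) := by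
  have hJV : Jmat t * vecMulVec τ τ = 0 := by rw [mul_vecMulVec, J_mulVec h0, zero_vecMulVec]
  have hVJ : vecMulVec τ τ * Jmat t = 0 := by rw [vecMulVec_mul, vecMul_J h0, vecMulVec_zero]
  have ht' : (t:ℝ) ≠ 0 := by positivity
  have hτ := (dot_self_pos h1).ne'
  simp only [Rm, add_mul, mul_add, smul_mul_assoc, mul_smul_comm, hJV, hVJ, JJ, VV, one_mul,
    mul_one, smul_zero, add_zero, zero_add, smul_smul]
  ext i j
  simp only [Matrix.add_apply, Matrix.smul_apply, smul_eq_mul]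
  field_simp
  ring

lemma Rm_mulVec_one {t : ℕ} (ht : 1 ≤ t) {τ : Fin t → ℝ} (h0 : ∑ i, τ i = 0)
    (a b : ℝ) : Rm τ a b *ᵥ (fun _ => 1) = fun _ => 1 := by
  have ht' : (t:ℝ) ≠ 0 := by positivity
  have hd : τ ⬝ᵥ (fun _ => (1:ℝ)) = 0 := by simp [dotProduct, h0]
  have hJ : Jmat t *ᵥ (fun _ => (1:ℝ)) = fun _ => (t:ℝ) := by
    ext i; simp [Jmat, mulVec, dotProduct]
  rw [Rm, add_mulVec, add_mulVec, smul_mulVec, smul_mulVec, smul_mulVec, one_mulVec, hJ,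
    vecMulVec_mulVec, hd]
  ext i
  simp
  field_simp
  ring

lemma Rm_mul_J {t : ℕ} (ht : 1 ≤ t) {τ : Fin t → ℝ} (h0 : ∑ i, τ i = 0)
    (a b : ℝ) : Rm τ a b * Jmat t = Jmat t := by
  rw [Jmat_eq, mul_vecMulVec, Rm_mulVec_one ht h0]

lemma J_mul_Rm {t : ℕ} (ht : 1 ≤ t) {τ : Fin t → ℝ} (h0 : ∑ i, τ i = 0)
    (a b : ℝ) : Jmat t * Rm τ a b = Jmat t := by
  have := congrArg Matrix.transpose (Rm_mul_J ht h0 a b)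
  rwa [transpose_mul, Rm_transpose, Jmat_transpose] at this

lemma Rm_det {t : ℕ} (ht : 2 ≤ t) {τ : Fin t → ℝ} (h0 : ∑ i, τ i = 0) (h1 : τ ≠ 0)
    {a : ℝ} (b : ℝ) (ha : a ≠ 0) : (Rm τ a b).det = a ^ (t - 2) * b := by
  have ht' : (t:ℝ) ≠ 0 := by positivity
  have hτ := (dot_self_pos h1).ne'
  have e : Rm τ a b = a • ((1 + ((1 - a) * (t:ℝ)⁻¹ * a⁻¹) • vecMulVec (fun _ => 1) (fun _ => 1)) *
      (1 + ((b - a) * (τ ⬝ᵥ τ)⁻¹ * a⁻¹) • vecMulVec τ τ)) := by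
    rw [← Jmat_eq]
    have hJV : Jmat t * vecMulVec τ τ = 0 := by rw [mul_vecMulVec, J_mulVec h0, zero_vecMulVec]
    simp only [Rm, add_mul, mul_add, smul_mul_assoc, mul_smul_comm, hJV, one_mul,
      mul_one, smul_zero, add_zero]
    ext i j
    simp only [Matrix.add_apply, Matrix.smul_apply, smul_eq_mul]
    field_simp
  have hd : (fun _ : Fin t => (1:ℝ)) ⬝ᵥ (fun _ => (1:ℝ)) = t := by simp [dotProduct]
  rw [e, det_smul, det_mul, det_one_add_smul_vecMulVec, det_one_add_smul_vecMulVec, hd,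
    Fintype.card_fin]
  obtain ⟨m, rfl⟩ : ∃ m, t = m + 2 := ⟨t - 2, by omega⟩
  rw [Nat.add_sub_cancel]
  field_simp
  ring

lemma trace_mul_vecMulVec {t : ℕ} (C : Matrix (Fin t) (Fin t) ℝ) (τ : Fin t → ℝ) :
    (C * vecMulVec τ τ).trace = τ ⬝ᵥ (C *ᵥ τ) := by
  rw [mul_vecMulVec, trace_vecMulVec, dotProduct_comm]

lemma Rm_conj_trace {t : ℕ} (ht : 1 ≤ t) {τ : Fin t → ℝ} (h0 : ∑ i, τ i = 0) (h1 : τ ≠ 0)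
    {C : Matrix (Fin t) (Fin t) ℝ} (hC : C *ᵥ (fun _ => 1) = 0) (a b : ℝ) :
    (Rm τ a b * C * Rm τ a b).trace =
      a ^ 2 * (C.trace - τ ⬝ᵥ (C *ᵥ τ) / (τ ⬝ᵥ τ)) + b ^ 2 * (τ ⬝ᵥ (C *ᵥ τ) / (τ ⬝ᵥ τ)) := by
  rw [mul_assoc, trace_mul_comm, mul_assoc, Rm_mul ht h0 h1]
  rw [Rm, mul_add, mul_add, mul_smul_comm, mul_smul_comm, mul_smul_comm, mul_Jmat_of hC, mul_one,
    trace_add, trace_add, trace_smul, trace_smul, trace_smul, trace_mul_vecMulVec]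
  simp
  ring

lemma PhiD_le_Rm {t : ℕ} (ht : 2 ≤ t) {τ : Fin t → ℝ} (h0 : ∑ i, τ i = 0) (h1 : τ ≠ 0)
    {C : Matrix (Fin t) (Fin t) ℝ} (hP : C.PosSemidef) (hC : C *ᵥ (fun _ => 1) = 0)
    {al be : ℝ} (hal : 0 < al) (hbe : 0 < be) :
    PhiD C ≤ (al ^ (t - 2) * be) ^ (((t : ℝ) - 1)⁻¹) *
      ((al⁻¹ * (C.trace - τ ⬝ᵥ (C *ᵥ τ) / (τ ⬝ᵥ τ)) + be⁻¹ * (τ ⬝ᵥ (C *ᵥ τ) / (τ ⬝ᵥ τ)))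
        / ((t : ℝ) - 1)) := by
  set a := Real.sqrt al⁻¹ with ha
  set b := Real.sqrt be⁻¹ with hb
  have ha2 : a ^ 2 = al⁻¹ := Real.sq_sqrt (by positivity)
  have hb2 : b ^ 2 = be⁻¹ := Real.sq_sqrt (by positivity)
  have hapos : 0 < a := Real.sqrt_pos.2 (by positivity)
  have hbpos : 0 < b := Real.sqrt_pos.2 (by positivity)
  have ht1 : 1 ≤ t := by omega
  have hP' : (Rm τ a b * C * Rm τ a b).PosSemidef := by
    have := hP.conjTranspose_mul_mul_same (Rm τ a b)
    rwa [conjTranspose_eq_transpose_of_trivial, Rm_transpose] at this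
  have hC' : (Rm τ a b * C * Rm τ a b) *ᵥ (fun _ => 1) = 0 := by
    rw [← mulVec_mulVec, Rm_mulVec_one ht1 h0, ← mulVec_mulVec, hC, mulVec_zero]
  have h := PhiD_le_trace ht hP' hC'
  rw [Rm_conj_trace ht1 h0 h1 hC, ha2, hb2, PhiD_eq ht1 hP' hC'] at h
  have hd : (Rm τ a b * C * Rm τ a b + (t : ℝ)⁻¹ • Jmat t).det =
      (al ^ (t - 2) * be)⁻¹ * (C + (t : ℝ)⁻¹ • Jmat t).det := by
    have : Rm τ a b * C * Rm τ a b + (t : ℝ)⁻¹ • Jmat t =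
        Rm τ a b * (C + (t : ℝ)⁻¹ • Jmat t) * Rm τ a b := by
      rw [mul_add, add_mul, mul_smul_comm, Rm_mul_J ht1 h0, smul_mul_assoc, J_mul_Rm ht1 h0]
    rw [this, det_mul, det_mul, Rm_det ht h0 h1 b hapos.ne']
    calc _ = ((a ^ 2) ^ (t-2) * b ^ 2) * (C + (t : ℝ)⁻¹ • Jmat t).det := by ring
      _ = _ := by rw [ha2, hb2, inv_pow, mul_inv]
  have hF : 0 < al ^ (t - 2) * be := by positivity
  rw [hd, Real.mul_rpow (by positivity) (det_nonneg_aux ht1 hP hC), Real.inv_rpow hF.le,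
    ← PhiD_eq ht1 hP hC] at h
  have hF2 : 0 < (al ^ (t - 2) * be) ^ (((t : ℝ) - 1)⁻¹) := Real.rpow_pos_of_pos hF _
  rw [inv_mul_le_iff₀ hF2] at h
  exact h

/-- Invariance under transpositions plus zero row sums forces a multiple of `B_t`. -/
lemma eq_smul_Bmat {t : ℕ} (ht : 2 ≤ t) {A : Matrix (Fin t) (Fin t) ℝ}
    (hA : ∀ i j k l, A (Equiv.swap i j k) (Equiv.swap i j l) = A k l)
    (hr : ∀ i, ∑ j, A i j = 0) : A = (A.trace / ((t : ℝ) - 1)) • Bmat t := by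
  have htp : (0:ℝ) < (t:ℝ) - 1 := by
    have : (2:ℝ) ≤ t := by exact_mod_cast ht
    linarith
  have ht0 : (t:ℝ) ≠ 0 := by positivity
  have hdiag : ∀ i j, A i i = A j j := by
    intro i j
    have := hA i j j j
    simpa using this
  have hoff : ∀ i j, i ≠ j → A i j = - A i i / ((t:ℝ) - 1) := by
    intro i j hij
    have hc : ∀ k ∈ Finset.univ.erase i, A i k = A i j := by
      intro k hk
      have hki : k ≠ i := Finset.ne_of_mem_erase hk
      have := hA j k i j
      rwa [Equiv.swap_apply_of_ne_of_ne hij hki.symm, Equiv.swap_apply_left] at this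
    have h := hr i
    rw [← Finset.add_sum_erase _ _ (Finset.mem_univ i), Finset.sum_congr rfl hc,
      Finset.sum_const, Finset.card_erase_of_mem (Finset.mem_univ _), nsmul_eq_mul,
      Finset.card_univ, Fintype.card_fin, Nat.cast_sub (by omega), Nat.cast_one] at h
    field_simp
    linarith
  have htr : ∀ i, A.trace = t * A i i := by
    intro i
    simp only [trace, diag]
    rw [Finset.sum_congr rfl (fun j _ => hdiag j i)]
    simp
  ext i j
  rw [htr i]
  by_cases hij : i = j
  · subst hij
    simp [Bmat, Jmat]
    field_simp
  · rw [hoff i j hij]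
    simp [Bmat, Jmat, hij]
    field_simp

section prior

lemma prior_meas {t : ℕ} (i j : Fin t) :
    Measurable fun τ : Fin t → ℝ => τ i * τ j / (τ ⬝ᵥ τ) := by
  simp only [dotProduct]
  fun_prop

lemma prior_integrable {t : ℕ} {g : Measure (Fin t → ℝ)} (hg : IsExchangeablePrior g)
    (i j : Fin t) : Integrable (fun τ : Fin t → ℝ => τ i * τ j / (τ ⬝ᵥ τ)) g := by
  have := hg.1
  refine Integrable.of_bound (prior_meas i j).aestronglyMeasurable 1 (Filter.Eventually.of_forall ?_)
  intro τ
  have hsq : ∀ k, τ k * τ k ≤ τ ⬝ᵥ τ := fun k =>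
    Finset.single_le_sum (f := fun k => τ k * τ k) (fun i _ => mul_self_nonneg (τ i))
      (Finset.mem_univ k)
  rcases (show 0 ≤ τ ⬝ᵥ τ from (mul_self_nonneg _).trans (hsq i)).eq_or_lt with h | h
  · rw [← h]; simp
  · rw [Real.norm_eq_abs, abs_div, abs_of_pos h, div_le_one h, abs_le]
    have h1 := hsq i
    have h2 := hsq j
    constructor <;> nlinarith [sq_nonneg (τ i + τ j), sq_nonneg (τ i - τ j)]

lemma prior_ae {t : ℕ} {g : Measure (Fin t → ℝ)} (hg : IsExchangeablePrior g) :
    ∀ᵐ τ ∂g, (∑ i, τ i) = 0 ∧ τ ≠ 0 := by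
  rw [ae_iff]; exact hg.2.1

lemma prior_moment {t : ℕ} (ht : 2 ≤ t) {g : Measure (Fin t → ℝ)} (hg : IsExchangeablePrior g) :
    (Matrix.of fun i j => ∫ τ : Fin t → ℝ, τ i * τ j / (τ ⬝ᵥ τ) ∂g) =
      (1 / ((t : ℝ) - 1)) • Bmat t := by
  have := hg.1
  set E : Matrix (Fin t) (Fin t) ℝ :=
    Matrix.of fun i j => ∫ τ : Fin t → ℝ, τ i * τ j / (τ ⬝ᵥ τ) ∂g with hE
  have htr : E.trace = 1 := by
    simp only [hE, trace, diag, Matrix.of_apply]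
    rw [← integral_finsetSum _ (fun i _ => prior_integrable hg i i)]
    have : ∀ᵐ τ ∂g, (∑ i, τ i * τ i / (τ ⬝ᵥ τ)) = 1 := by
      filter_upwards [prior_ae hg] with τ hτ
      rw [← Finset.sum_div]
      exact div_self (dot_self_pos hτ.2).ne'
    rw [integral_congr_ae this]; simp
  have h := eq_smul_Bmat ht (A := E) ?_ ?_
  · rw [htr] at h; exact h
  · intro i j k l
    simp only [hE, Matrix.of_apply]
    have hm : Measurable (fun (τ : Fin t → ℝ) m => τ (Equiv.swap i j m)) := by fun_prop
    conv_rhs => rw [← hg.2.2 (Equiv.swap i j)]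
    rw [integral_map hm.aemeasurable (prior_meas k l).aestronglyMeasurable]
    congr 1
    ext τ
    congr 1
    simp only [dotProduct]
    exact (Equiv.sum_comp (Equiv.swap i j) (fun m => τ m * τ m)).symm
  · intro i
    simp only [hE, Matrix.of_apply]
    rw [← integral_finsetSum _ (fun j _ => prior_integrable hg i j)]
    have : ∀ᵐ τ ∂g, (∑ j, τ i * τ j / (τ ⬝ᵥ τ)) = 0 := by
      filter_upwards [prior_ae hg] with τ hτ
      rw [← Finset.sum_div, ← Finset.mul_sum, hτ.1, mul_zero, zero_div]
    rw [integral_congr_ae this]; simp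

lemma quad_expand {t : ℕ} (A : Matrix (Fin t) (Fin t) ℝ) (τ : Fin t → ℝ) :
    τ ⬝ᵥ (A *ᵥ τ) / (τ ⬝ᵥ τ) = ∑ i, ∑ j, A i j * (τ i * τ j / (τ ⬝ᵥ τ)) := by
  simp only [mulVec, dotProduct, Finset.mul_sum, Finset.sum_div]
  refine Finset.sum_congr rfl fun i _ => Finset.sum_congr rfl fun j _ => ?_
  ring

lemma prior_quad_integrable {t : ℕ} {g : Measure (Fin t → ℝ)}
    (hg : IsExchangeablePrior g) (A : Matrix (Fin t) (Fin t) ℝ) :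
    Integrable (fun τ => τ ⬝ᵥ (A *ᵥ τ) / (τ ⬝ᵥ τ)) g := by
  simp only [quad_expand]
  exact integrable_finsetSum _ fun i _ => integrable_finsetSum _ fun j _ =>
    (prior_integrable hg i j).const_mul _

lemma prior_quad {t : ℕ} (ht : 2 ≤ t) {g : Measure (Fin t → ℝ)} (hg : IsExchangeablePrior g)
    {A : Matrix (Fin t) (Fin t) ℝ} (hA : A *ᵥ (fun _ => 1) = 0) :
    ∫ τ, τ ⬝ᵥ (A *ᵥ τ) / (τ ⬝ᵥ τ) ∂g = A.trace / ((t : ℝ) - 1) := by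
  simp only [quad_expand]
  refine (integral_finsetSum _ fun i _ => integrable_finsetSum _ fun j _ =>
    (prior_integrable hg i j).const_mul _).trans ?_
  have h1 : ∀ i, ∫ τ, (∑ j, A i j * (τ i * τ j / (τ ⬝ᵥ τ))) ∂g =
      ∑ j, A i j * (((1 / ((t : ℝ) - 1)) • Bmat t) i j) := by
    intro i
    rw [integral_finsetSum _ fun j _ => (prior_integrable hg i j).const_mul _]
    refine Finset.sum_congr rfl fun j _ => ?_
    rw [integral_const_mul, ← prior_moment ht hg, Matrix.of_apply]
  simp only [h1]
  have hrow : ∀ i, ∑ j, A i j = 0 := by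
    intro i
    have := congrFun hA i
    simpa [mulVec, dotProduct] using this
  have h2 : ∀ i, ∑ j, A i j * (((1 / ((t : ℝ) - 1)) • Bmat t) i j) = A i i / ((t : ℝ) - 1) := by
    intro i
    have : ∀ j, A i j * (((1 / ((t : ℝ) - 1)) • Bmat t) i j) =
        (if i = j then A i j / ((t:ℝ) - 1) else 0) - A i j * ((t:ℝ)⁻¹ / ((t:ℝ) - 1)) := by
      intro j
      by_cases hij : i = j
      · subst hij; simp [Bmat, Jmat]; ring
      · simp [Bmat, Jmat, hij, -mul_eq_mul_left_iff]; ring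
    simp only [this]
    rw [Finset.sum_sub_distrib, ← Finset.sum_mul, hrow i]
    simp
  simp only [h2, trace, diag, Finset.sum_div]

end prior

section btil

lemma Btil_transpose {p : ℕ} {S : Matrix (Fin p) (Fin p) ℝ} (hS : S.PosDef) :
    (Btil S)ᵀ = Btil S := by
  have h : (S⁻¹)ᵀ = S⁻¹ := by
    have := hS.inv.isHermitian
    rwa [IsHermitian, conjTranspose_eq_transpose_of_trivial] at this
  simp [Btil, transpose_mul, h, Jmat_transpose, mul_assoc]

lemma Btil_psd {p : ℕ} (hp : 1 ≤ p) {S : Matrix (Fin p) (Fin p) ℝ} (hS : S.PosDef) :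
    (Btil S).PosSemidef := by
  have h : (S⁻¹)ᵀ = S⁻¹ := by
    have := hS.inv.isHermitian
    rwa [IsHermitian, conjTranspose_eq_transpose_of_trivial] at this
  set r : ℝ := (((fun _ => (1 : ℝ)) : Fin p → ℝ) ⬝ᵥ (S⁻¹ *ᵥ fun _ => (1 : ℝ))) with hr
  have hrpos : 0 < r := by
    have := hS.inv.dotProduct_mulVec_pos (x := fun _ => (1:ℝ)) (by
      intro h0; have := congrFun h0 ⟨0, hp⟩; simp at this)
    simpa [hr] using this
  have hJ : Jmat p * (S⁻¹ * Jmat p) = r • Jmat p := by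
    rw [Jmat_eq, mul_vecMulVec, vecMulVec_mul_vecMulVec]
    ext i j; simp [vecMulVec_apply, hr]
  have e : Btil S = (1 - r⁻¹ • (Jmat p * S⁻¹))ᵀ * S⁻¹ * (1 - r⁻¹ • (Jmat p * S⁻¹)) := by
    have h3 : S⁻¹ * Jmat p * S⁻¹ * (Jmat p * S⁻¹) = r • (S⁻¹ * Jmat p * S⁻¹) := by
      calc _ = S⁻¹ * (Jmat p * (S⁻¹ * Jmat p)) * S⁻¹ := by simp only [mul_assoc]
        _ = _ := by rw [hJ]; simp
    rw [transpose_sub, transpose_smul, transpose_mul, h, Jmat_transpose, transpose_one, sub_mul,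
      one_mul, mul_sub, mul_one, smul_mul_assoc, mul_smul_comm, sub_mul, smul_mul_assoc,
      h3, Btil, ← hr, ← mul_assoc, inv_smul_smul₀ hrpos.ne', sub_self, smul_zero, sub_zero]
  rw [e]
  have := hS.inv.posSemidef.conjTranspose_mul_mul_same (1 - r⁻¹ • (Jmat p * S⁻¹))
  rwa [conjTranspose_eq_transpose_of_trivial] at this

end btil

section info

variable {p t : ℕ}

lemma Bmat_transpose (t : ℕ) : (Bmat t)ᵀ = Bmat t := by simp [Bmat, Jmat_transpose]

lemma Bmat_mulVec_one (ht : 1 ≤ t) : Bmat t *ᵥ (fun _ => 1) = 0 := by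
  have ht' : (t:ℝ) ≠ 0 := by positivity
  rw [Bmat, sub_mulVec, one_mulVec, smul_mulVec]
  ext i
  simp [Jmat, mulVec, dotProduct, ht']

/-- `G_i(s) B_t`. -/
def Um (i : Fin 2) (s : TrtSeq p t) : Matrix (Fin p) (Fin t) ℝ := Gmat i s * Bmat t

lemma Chat_eq (S : Matrix (Fin p) (Fin p) ℝ) (s : TrtSeq p t) (i j : Fin 2) :
    Chat S s i j = (Um i s)ᵀ * Btil S * Um j s := by
  simp only [Chat, Um, transpose_mul, Bmat_transpose, Matrix.mul_assoc]

lemma Chat_transpose {S : Matrix (Fin p) (Fin p) ℝ} (hS : S.PosDef) (s : TrtSeq p t)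
    (i j : Fin 2) : (Chat S s i j)ᵀ = Chat S s j i := by
  simp only [Chat_eq, transpose_mul, Btil_transpose hS, transpose_transpose, Matrix.mul_assoc]

lemma cseq_symm {S : Matrix (Fin p) (Fin p) ℝ} (hS : S.PosDef) (s : TrtSeq p t)
    (i j : Fin 2) : cseq S s i j = cseq S s j i := by
  rw [cseq, ← trace_transpose, Chat_transpose hS, cseq]

lemma Chat_mulVec_one (ht : 1 ≤ t) (S : Matrix (Fin p) (Fin p) ℝ) (s : TrtSeq p t)
    (i j : Fin 2) : Chat S s i j *ᵥ (fun _ => 1) = 0 := by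
  rw [Chat, ← mulVec_mulVec, Bmat_mulVec_one ht, mulVec_zero]

lemma ChatD_transpose {S : Matrix (Fin p) (Fin p) ℝ} (hS : S.PosDef) (n : ℕ) (w : TrtSeq p t → ℝ)
    (i j : Fin 2) : (ChatD n S w i j)ᵀ = ChatD n S w j i := by
  simp only [ChatD, transpose_smul, transpose_sum, Chat_transpose hS]

lemma ChatD_mulVec_one (ht : 1 ≤ t) (n : ℕ) (S : Matrix (Fin p) (Fin p) ℝ) (w : TrtSeq p t → ℝ)
    (i j : Fin 2) : ChatD n S w i j *ᵥ (fun _ => 1) = 0 := by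
  simp only [ChatD, smul_mulVec, sum_mulVec, Chat_mulVec_one ht, smul_zero, Finset.sum_const_zero]

/-- Mean of `G_i(s) B_t`. -/
def Ubar (w : TrtSeq p t → ℝ) (i : Fin 2) : Matrix (Fin p) (Fin t) ℝ :=
  ∑ s : TrtSeq p t, w s • Um i s

lemma CD_eq (n : ℕ) (S : Matrix (Fin p) (Fin p) ℝ) (w : TrtSeq p t → ℝ) (i j : Fin 2) :
    CD n S w i j = ChatD n S w i j - (n : ℝ) • ((Ubar w i)ᵀ * Btil S * Ubar w j) := rfl

lemma CD_transpose {S : Matrix (Fin p) (Fin p) ℝ} (hS : S.PosDef) (n : ℕ) (w : TrtSeq p t → ℝ)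
    (i j : Fin 2) : (CD n S w i j)ᵀ = CD n S w j i := by
  simp only [CD_eq, transpose_sub, ChatD_transpose hS, transpose_smul, transpose_mul,
    Btil_transpose hS, transpose_transpose, Matrix.mul_assoc]

lemma Ubar_mulVec_one (ht : 1 ≤ t) (w : TrtSeq p t → ℝ) (i : Fin 2) :
    Ubar w i *ᵥ (fun _ => 1) = 0 := by
  simp only [Ubar, sum_mulVec, smul_mulVec, Um, ← mulVec_mulVec, Bmat_mulVec_one ht, mulVec_zero,
    smul_zero, Finset.sum_const_zero]

lemma CD_mulVec_one (ht : 1 ≤ t) (n : ℕ) (S : Matrix (Fin p) (Fin p) ℝ) (w : TrtSeq p t → ℝ)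
    (i j : Fin 2) : CD n S w i j *ᵥ (fun _ => 1) = 0 := by
  rw [CD_eq, sub_mulVec, ChatD_mulVec_one ht, smul_mulVec, ← mulVec_mulVec, Ubar_mulVec_one ht,
    mulVec_zero, smul_zero, sub_zero]

/-- Weighted covariance is positive semidefinite. -/
lemma cov_psd {ι : Type*} [Fintype ι] {m : ℕ} {B : Matrix (Fin p) (Fin p) ℝ} (hB : B.PosSemidef)
    (w : ι → ℝ) (hw : ∀ s, 0 ≤ w s) (hw1 : ∑ s, w s = 1) (X : ι → Matrix (Fin p) (Fin m) ℝ) :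
    (∑ s, w s • ((X s)ᵀ * B * X s) - (∑ s, w s • X s)ᵀ * B * (∑ s, w s • X s)).PosSemidef := by
  set M := ∑ s, w s • X s with hM
  have e : ∑ s, w s • ((X s)ᵀ * B * X s) - Mᵀ * B * M =
      ∑ s, w s • ((X s - M)ᵀ * B * (X s - M)) := by
    have h1 : ∀ s, w s • ((X s - M)ᵀ * B * (X s - M)) = w s • ((X s)ᵀ * B * X s)
        - (w s • X s)ᵀ * B * M - Mᵀ * B * (w s • X s) + w s • (Mᵀ * B * M) := by
      intro s
      simp only [transpose_sub, Matrix.sub_mul, Matrix.mul_sub, smul_sub, transpose_smul,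
        Matrix.smul_mul, Matrix.mul_smul]
      abel
    simp only [h1, Finset.sum_add_distrib, Finset.sum_sub_distrib]
    rw [← Finset.sum_smul, hw1, one_smul, ← Matrix.mul_sum, ← Matrix.sum_mul, ← Matrix.sum_mul,
      ← transpose_sum, ← hM]
    abel
  rw [e]
  refine posSemidef_sum _ fun s _ => PosSemidef.smul ?_ (hw s)
  have := hB.conjTranspose_mul_mul_same (X s - M)
  rwa [conjTranspose_eq_transpose_of_trivial] at this

lemma joint_psd (hp : 1 ≤ p) (n : ℕ) {S : Matrix (Fin p) (Fin p) ℝ} (hS : S.PosDef)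
    {w : TrtSeq p t → ℝ} (hw : IsDesign w) (Y Z : Matrix (Fin t) (Fin t) ℝ) :
    (Yᵀ * CD n S w 0 0 * Y + Yᵀ * CD n S w 0 1 * Z + Zᵀ * CD n S w 1 0 * Y +
      Zᵀ * CD n S w 1 1 * Z).PosSemidef := by
  have h := (cov_psd (Btil_psd hp hS) w hw.1 hw.2 (fun s => Um 0 s * Y + Um 1 s * Z)).smul
    (Nat.cast_nonneg n : (0:ℝ) ≤ n)
  convert h using 1
  have h2 : ∑ s, w s • (Um 0 s * Y + Um 1 s * Z) = Ubar w 0 * Y + Ubar w 1 * Z := by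
    simp only [smul_add, Finset.sum_add_distrib, Ubar, Matrix.sum_mul, Matrix.smul_mul]
  have h3 : ∑ s, w s • ((Um 0 s * Y + Um 1 s * Z)ᵀ * Btil S * (Um 0 s * Y + Um 1 s * Z)) =
      Yᵀ * (∑ s, w s • Chat S s 0 0) * Y + Yᵀ * (∑ s, w s • Chat S s 0 1) * Z +
      Zᵀ * (∑ s, w s • Chat S s 1 0) * Y + Zᵀ * (∑ s, w s • Chat S s 1 1) * Z := by
    simp only [Matrix.mul_sum, Matrix.sum_mul, ← Finset.sum_add_distrib]
    refine Finset.sum_congr rfl fun s _ => ?_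
    simp only [Chat_eq, transpose_add, transpose_mul, Matrix.add_mul, Matrix.mul_add, smul_add,
      Matrix.mul_smul, Matrix.smul_mul, Matrix.mul_assoc]
    abel
  rw [h2, h3]
  simp only [CD_eq, ChatD, transpose_add, transpose_mul, Matrix.add_mul, Matrix.mul_add, smul_add,
      Matrix.mul_smul, Matrix.smul_mul, Matrix.mul_assoc, Matrix.sub_mul, Matrix.mul_sub, smul_sub]
  abel

/-- `C11 + x (C12 + C21) + x^2 C22`. -/
def QDm (n : ℕ) (S : Matrix (Fin p) (Fin p) ℝ) (w : TrtSeq p t → ℝ) (x : ℝ) :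
    Matrix (Fin t) (Fin t) ℝ :=
  CD n S w 0 0 + x • (CD n S w 0 1 + CD n S w 1 0) + (x ^ 2) • CD n S w 1 1

/-- The same with hats. -/
def QHm (n : ℕ) (S : Matrix (Fin p) (Fin p) ℝ) (w : TrtSeq p t → ℝ) (x : ℝ) :
    Matrix (Fin t) (Fin t) ℝ :=
  ChatD n S w 0 0 + x • (ChatD n S w 0 1 + ChatD n S w 1 0) + (x ^ 2) • ChatD n S w 1 1

lemma cD_eq (n : ℕ) (S : Matrix (Fin p) (Fin p) ℝ) (w : TrtSeq p t → ℝ) (i j : Fin 2) :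
    cD n S w i j = n * ∑ s, w s * cseq S s i j := by
  simp [cD, ChatD, trace_smul, trace_sum, cseq]

lemma cD_symm {S : Matrix (Fin p) (Fin p) ℝ} (hS : S.PosDef) (n : ℕ) (w : TrtSeq p t → ℝ)
    (i j : Fin 2) : cD n S w i j = cD n S w j i := by
  simp only [cD_eq, cseq_symm hS _ i j]

lemma n_qD (n : ℕ) (S : Matrix (Fin p) (Fin p) ℝ) (w : TrtSeq p t → ℝ) (x : ℝ) :
    n * qD S w x = cD n S w 0 0 + 2 * cD n S w 0 1 * x + cD n S w 1 1 * x ^ 2 := by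
  simp only [cD_eq, qD, qSeq, mul_add, Finset.sum_add_distrib, Finset.mul_sum, Finset.sum_mul]
  congr 1
  · congr 1
    exact Finset.sum_congr rfl fun s _ => by ring
  · exact Finset.sum_congr rfl fun s _ => by ring

lemma QHm_trace {S : Matrix (Fin p) (Fin p) ℝ} (hS : S.PosDef) (n : ℕ) (w : TrtSeq p t → ℝ)
    (x : ℝ) : (QHm n S w x).trace = n * qD S w x := by
  rw [n_qD, QHm, trace_add, trace_add, trace_smul, trace_smul, trace_add]
  change cD n S w 0 0 + x • (cD n S w 0 1 + cD n S w 1 0) + x ^ 2 • cD n S w 1 1 = _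
  rw [cD_symm hS n w 1 0]
  simp only [smul_eq_mul]
  ring

lemma QHm_mulVec_one (ht : 1 ≤ t) (n : ℕ) (S : Matrix (Fin p) (Fin p) ℝ) (w : TrtSeq p t → ℝ)
    (x : ℝ) : QHm n S w x *ᵥ (fun _ => 1) = 0 := by
  simp [QHm, add_mulVec, smul_mulVec, ChatD_mulVec_one ht]

lemma QHm_sub_psd (hp : 1 ≤ p) {S : Matrix (Fin p) (Fin p) ℝ} (hS : S.PosDef) (n : ℕ)
    (w : TrtSeq p t → ℝ) (x : ℝ) : (QHm n S w x - QDm n S w x).PosSemidef := by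
  have h := ((Btil_psd hp hS).conjTranspose_mul_mul_same (Ubar w 0 + x • Ubar w 1)).smul
    (Nat.cast_nonneg n : (0:ℝ) ≤ n)
  rw [conjTranspose_eq_transpose_of_trivial] at h
  convert h using 1
  simp only [QHm, QDm, CD_eq, transpose_add, transpose_smul, Matrix.add_mul, Matrix.mul_add,
    smul_add, Matrix.mul_smul, Matrix.smul_mul, smul_sub, smul_smul]
  rw [mul_comm x n, ← sq, mul_comm (x ^ 2)]
  abel

lemma CInfo_eq (n : ℕ) (S : Matrix (Fin p) (Fin p) ℝ) (w : TrtSeq p t → ℝ) (τ : Fin t → ℝ)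
    (l0 : ℝ) : CInfo n S w τ l0 = QDm n S w l0 - (τ ⬝ᵥ (CD n S w 1 1 *ᵥ τ))⁻¹ •
      ((CD n S w 0 1 + l0 • CD n S w 1 1) * vecMulVec τ τ *
        (CD n S w 1 0 + l0 • CD n S w 1 1)) := rfl

lemma CInfo_mulVec_one (ht : 1 ≤ t) (n : ℕ) (S : Matrix (Fin p) (Fin p) ℝ) (w : TrtSeq p t → ℝ)
    (τ : Fin t → ℝ) (l0 : ℝ) : CInfo n S w τ l0 *ᵥ (fun _ => 1) = 0 := by
  simp [CInfo, add_mulVec, sub_mulVec, smul_mulVec, CD_mulVec_one ht, ← mulVec_mulVec]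

lemma VCV (C : Matrix (Fin t) (Fin t) ℝ) (τ : Fin t → ℝ) :
    vecMulVec τ τ * (C * vecMulVec τ τ) = (τ ⬝ᵥ (C *ᵥ τ)) • vecMulVec τ τ := by
  rw [mul_vecMulVec, vecMulVec_mul_vecMulVec]
  ext i j; simp [vecMulVec_apply]; ring

lemma CInfo_psd (hp : 1 ≤ p) (n : ℕ) {S : Matrix (Fin p) (Fin p) ℝ} (hS : S.PosDef)
    {w : TrtSeq p t → ℝ} (hw : IsDesign w) {τ : Fin t → ℝ} (l0 : ℝ)
    (ha : 0 < τ ⬝ᵥ (CD n S w 1 1 *ᵥ τ)) : (CInfo n S w τ l0).PosSemidef := by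
  have hV : (vecMulVec τ τ)ᵀ = vecMulVec τ τ := transpose_vecMulVec _ _
  have hK := VCV (CD n S w 1 1) τ
  set a := τ ⬝ᵥ (CD n S w 1 1 *ᵥ τ) with haa
  have h := joint_psd hp n hS hw 1
    (l0 • 1 - a⁻¹ • (vecMulVec τ τ * (CD n S w 1 0 + l0 • CD n S w 1 1)))
  convert h using 1
  rw [CInfo, ← haa]
  simp only [transpose_one, transpose_sub, transpose_smul, transpose_mul, transpose_add,
    CD_transpose hS, hV]
  set A := CD n S w 0 0
  set B := CD n S w 0 1
  set D := CD n S w 1 0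
  set E := CD n S w 1 1
  set V := vecMulVec τ τ
  have hK2 : ∀ X, V * (E * (V * X)) = a • (V * X) := by
    intro X
    rw [← mul_assoc E, ← mul_assoc V, hK, smul_mul_assoc]
  simp only [mul_one, one_mul, mul_add, add_mul, mul_sub, sub_mul, smul_mul_assoc, mul_smul_comm,
    mul_assoc, smul_add, smul_sub, smul_smul, hK2]
  have ha' : a⁻¹ * a = 1 := inv_mul_cancel₀ ha.ne'
  ext i j
  simp only [Matrix.add_apply, Matrix.sub_apply, Matrix.smul_apply, smul_eq_mul]
  field_simp
  ring

lemma CInfo_le_QDm {S : Matrix (Fin p) (Fin p) ℝ} (hS : S.PosDef) (n : ℕ)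
    (w : TrtSeq p t → ℝ) {τ : Fin t → ℝ} (l0 : ℝ)
    (ha : 0 < τ ⬝ᵥ (CD n S w 1 1 *ᵥ τ)) : (QDm n S w l0 - CInfo n S w τ l0).PosSemidef := by
  rw [CInfo_eq, sub_sub_cancel]
  refine PosSemidef.smul ?_ (by positivity)
  have h := (posSemidef_vecMulVec_self_star τ).conjTranspose_mul_mul_same
    (CD n S w 1 0 + l0 • CD n S w 1 1)
  rw [conjTranspose_eq_transpose_of_trivial, transpose_add, transpose_smul, CD_transpose hS,
    CD_transpose hS] at h
  simpa using h

lemma CInfo_quad_le {S : Matrix (Fin p) (Fin p) ℝ} (hS : S.PosDef) (n : ℕ)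
    (w : TrtSeq p t → ℝ) {τ : Fin t → ℝ} (l0 x : ℝ)
    (ha : 0 < τ ⬝ᵥ (CD n S w 1 1 *ᵥ τ)) :
    τ ⬝ᵥ (CInfo n S w τ l0 *ᵥ τ) ≤ τ ⬝ᵥ (QDm n S w x *ᵥ τ) := by
  have hs : τ ⬝ᵥ (CD n S w 1 0 *ᵥ τ) = τ ⬝ᵥ (CD n S w 0 1 *ᵥ τ) := by
    rw [← CD_transpose hS n w 0 1, mulVec_transpose, dotProduct_comm, ← dotProduct_mulVec]
  rw [CInfo_eq, mul_vecMulVec]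
  simp only [QDm, sub_mulVec, add_mulVec, smul_mulVec, dotProduct_add, dotProduct_sub,
    dotProduct_smul, ← mulVec_mulVec, vecMulVec_mulVec, hs, smul_eq_mul, op_smul_eq_smul]
  generalize τ ⬝ᵥ (CD n S w 1 1 *ᵥ τ) = a at ha ⊢
  generalize τ ⬝ᵥ (CD n S w 0 1 *ᵥ τ) = b
  generalize τ ⬝ᵥ (CD n S w 0 0 *ᵥ τ) = c
  have e : c + x * (b + b) + x ^ 2 * a - (c + l0 * (b + b) + l0 ^ 2 * a -
      a⁻¹ * ((b + l0 * a) * (b + l0 * a))) = a⁻¹ * (b + x * a) ^ 2 := by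
    field_simp
    ring
  have : 0 ≤ a⁻¹ * (b + x * a) ^ 2 := by positivity
  linarith

lemma psd_trace_quad {A : Matrix (Fin t) (Fin t) ℝ} (hA : A.PosSemidef) {τ : Fin t → ℝ}
    (h1 : τ ≠ 0) : 0 ≤ A.trace - τ ⬝ᵥ (A *ᵥ τ) / (τ ⬝ᵥ τ) := by
  have hτ := dot_self_pos h1
  set P := (1 : Matrix (Fin t) (Fin t) ℝ) - (τ ⬝ᵥ τ)⁻¹ • vecMulVec τ τ with hP
  have hPt : Pᵀ = P := by simp [hP, transpose_vecMulVec]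
  have hPP : P * P = P := by
    simp only [hP, mul_sub, sub_mul, mul_one, one_mul, smul_mul_assoc, mul_smul_comm, VV,
      inv_smul_smul₀ hτ.ne', sub_self, smul_zero, sub_zero]
  have h := (hA.conjTranspose_mul_mul_same P).trace_nonneg
  rw [conjTranspose_eq_transpose_of_trivial, hPt, mul_assoc, trace_mul_comm, mul_assoc, hPP, hP,
    mul_sub, mul_one, trace_sub, mul_smul_comm, trace_smul, trace_mul_vecMulVec] at h
  rw [div_eq_inv_mul]
  exact h

end info

section designs

variable {p t : ℕ}

lemma PhiCrit_le (hp : 1 ≤ p) (ht : 2 ≤ t) (n : ℕ) {S : Matrix (Fin p) (Fin p) ℝ}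
    (hS : S.PosDef) (l0 x : ℝ) {g : Measure (Fin t → ℝ)} (hg : IsExchangeablePrior g)
    {w : TrtSeq p t → ℝ} (hw : PhiAdmissible n S PhiD g l0 w) {al be : ℝ} (hal : 0 < al)
    (hbe : 0 < be) :
    PhiCrit n S PhiD g l0 w ≤ (al ^ (t - 2) * be) ^ (((t : ℝ) - 1)⁻¹) *
      ((al⁻¹ * (n * qD S w l0 - n * qD S w l0 / ((t : ℝ) - 1)) +
        be⁻¹ * (n * qD S w x / ((t : ℝ) - 1))) / ((t : ℝ) - 1)) := by
  have := hg.1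
  have htp : (0:ℝ) < (t:ℝ) - 1 := by
    have : (2:ℝ) ≤ t := by exact_mod_cast ht
    linarith
  have ht1 : 1 ≤ t := by omega
  have hi1 := prior_quad_integrable hg (QHm n S w l0)
  have hi2 := prior_quad_integrable hg (QHm n S w x)
  have hI : Integrable (fun τ : Fin t → ℝ => (al⁻¹ * ((QHm n S w l0).trace -
        τ ⬝ᵥ (QHm n S w l0 *ᵥ τ) / (τ ⬝ᵥ τ)) +
        be⁻¹ * (τ ⬝ᵥ (QHm n S w x *ᵥ τ) / (τ ⬝ᵥ τ)))) g :=
    (((integrable_const _).sub hi1).const_mul _).add (hi2.const_mul _)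
  have hle : PhiCrit n S PhiD g l0 w ≤ ∫ τ : Fin t → ℝ,
      (al ^ (t - 2) * be) ^ (((t : ℝ) - 1)⁻¹) *
      ((al⁻¹ * ((QHm n S w l0).trace - τ ⬝ᵥ (QHm n S w l0 *ᵥ τ) / (τ ⬝ᵥ τ)) +
        be⁻¹ * (τ ⬝ᵥ (QHm n S w x *ᵥ τ) / (τ ⬝ᵥ τ))) / ((t : ℝ) - 1)) ∂g := by
    refine integral_mono_ae hw.2.2 ((hI.div_const _).const_mul _) ?_
    filter_upwards [prior_ae hg, hw.2.1] with τ hτ ha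
    have hdd := dot_self_pos hτ.2
    refine (PhiD_le_Rm ht hτ.1 hτ.2 (CInfo_psd hp n hS hw.1 l0 ha)
      (CInfo_mulVec_one ht1 n S w τ l0) hal hbe).trans ?_
    have hF : 0 < (al ^ (t - 2) * be) ^ (((t : ℝ) - 1)⁻¹) := by positivity
    have e1 : (CInfo n S w τ l0).trace - τ ⬝ᵥ (CInfo n S w τ l0 *ᵥ τ) / (τ ⬝ᵥ τ) ≤
        (QHm n S w l0).trace - τ ⬝ᵥ (QHm n S w l0 *ᵥ τ) / (τ ⬝ᵥ τ) := by
      have h := psd_trace_quad ((QHm_sub_psd hp hS n w l0).add (CInfo_le_QDm hS n w l0 ha)) hτ.2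
      rw [sub_add_sub_cancel, trace_sub, sub_mulVec, dotProduct_sub, sub_div] at h
      linarith
    have e2 : τ ⬝ᵥ (CInfo n S w τ l0 *ᵥ τ) / (τ ⬝ᵥ τ) ≤
        τ ⬝ᵥ (QHm n S w x *ᵥ τ) / (τ ⬝ᵥ τ) := by
      have h := (QHm_sub_psd hp hS n w x).dotProduct_mulVec_nonneg τ
      rw [star_trivial, sub_mulVec, dotProduct_sub] at h
      have h2 := CInfo_quad_le hS n w l0 x ha
      gcongr
      linarith
    gcongr
  refine hle.trans (le_of_eq ?_)
  rw [integral_const_mul, integral_div, integral_add, integral_const_mul, integral_const_mul,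
    integral_sub (integrable_const _) hi1, prior_quad ht hg (QHm_mulVec_one ht1 n S w l0),
    prior_quad ht hg (QHm_mulVec_one ht1 n S w x), QHm_trace hS, QHm_trace hS]
  · simp
  · exact ((integrable_const _).sub hi1).const_mul _
  · exact hi2.const_mul _

/-- Balanced designs with completely symmetric information. -/
def Nice (n : ℕ) (S : Matrix (Fin p) (Fin p) ℝ) (w : TrtSeq p t → ℝ) : Prop :=
  (∀ i, Ubar w i = 0) ∧ ∀ i j, ChatD n S w i j = (cD n S w i j / ((t:ℝ) - 1)) • Bmat t

lemma Bmat_mul_V {τ : Fin t → ℝ} (h : ∑ i, τ i = 0) :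
    Bmat t * vecMulVec τ τ = vecMulVec τ τ := by
  rw [mul_vecMulVec, Bmat, sub_mulVec, one_mulVec, smul_mulVec, J_mulVec h, smul_zero, sub_zero]

lemma V_mul_Bmat {τ : Fin t → ℝ} (h : ∑ i, τ i = 0) :
    vecMulVec τ τ * Bmat t = vecMulVec τ τ := by
  have := congrArg Matrix.transpose (Bmat_mul_V h)
  rwa [transpose_mul, Bmat_transpose, transpose_vecMulVec] at this

lemma Nice.CD {n : ℕ} {S : Matrix (Fin p) (Fin p) ℝ} {w : TrtSeq p t → ℝ} (h : Nice n S w)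
    (i j : Fin 2) : CD n S w i j = (cD n S w i j / ((t:ℝ) - 1)) • Bmat t := by
  rw [CD_eq, h.1 i, h.2 i j]; simp

lemma n_qD_xD (n : ℕ) (S : Matrix (Fin p) (Fin p) ℝ) (w : TrtSeq p t → ℝ)
    (hc : 0 < cD n S w 1 1) :
    n * qD S w (xD n S w) = cD n S w 0 0 - cD n S w 0 1 ^ 2 / cD n S w 1 1 := by
  rw [n_qD, xD]
  field_simp
  ring

lemma Nice.pos {n : ℕ} (ht : 2 ≤ t) {S : Matrix (Fin p) (Fin p) ℝ} {w : TrtSeq p t → ℝ}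
    (h : Nice n S w) (hc : 0 < cD n S w 1 1) {τ : Fin t → ℝ} (h0 : ∑ i, τ i = 0) (h1 : τ ≠ 0) :
    τ ⬝ᵥ (_root_.CD n S w 1 1 *ᵥ τ) = cD n S w 1 1 / ((t:ℝ) - 1) * (τ ⬝ᵥ τ) ∧
    0 < τ ⬝ᵥ (_root_.CD n S w 1 1 *ᵥ τ) := by
  have htp : (0:ℝ) < (t:ℝ) - 1 := by
    have : (2:ℝ) ≤ t := by exact_mod_cast ht
    linarith
  have e : τ ⬝ᵥ (_root_.CD n S w 1 1 *ᵥ τ) = cD n S w 1 1 / ((t:ℝ) - 1) * (τ ⬝ᵥ τ) := by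
    rw [h.CD, smul_mulVec, Bmat, sub_mulVec, one_mulVec, smul_mulVec, J_mulVec h0, smul_zero,
      sub_zero, dotProduct_smul, smul_eq_mul]
  refine ⟨e, ?_⟩
  rw [e]
  have := dot_self_pos h1
  positivity

lemma Nice.PhiD_CInfo (hp : 1 ≤ p) (ht : 2 ≤ t) {n : ℕ} {S : Matrix (Fin p) (Fin p) ℝ}
    (hS : S.PosDef) {w : TrtSeq p t → ℝ} (hw : IsDesign w)
    (h : Nice n S w) (hc : 0 < cD n S w 1 1) (l0 : ℝ) (hq : n * qD S w l0 ≠ 0)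
    {τ : Fin t → ℝ} (h0 : ∑ i, τ i = 0) (h1 : τ ≠ 0) :
    PhiD (CInfo n S w τ l0) = ((n * qD S w l0 / ((t:ℝ) - 1)) ^ (t - 2) *
      (n * qD S w (xD n S w) / ((t:ℝ) - 1))) ^ (((t : ℝ) - 1)⁻¹) := by
  have htp : (0:ℝ) < (t:ℝ) - 1 := by
    have : (2:ℝ) ≤ t := by exact_mod_cast ht
    linarith
  have ht1 : 1 ≤ t := by omega
  obtain ⟨e, hpos⟩ := h.pos ht hc h0 h1
  have hdd := dot_self_pos h1
  rw [PhiD_eq ht1 (CInfo_psd hp n hS hw l0 hpos) (CInfo_mulVec_one ht1 n S w τ l0),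
    ← Rm_det ht h0 h1 _ (div_ne_zero hq htp.ne')]
  congr 2
  rw [n_qD_xD n S w hc, n_qD, CInfo, e]
  simp only [h.CD, cD_symm hS n w 1 0]
  have hV : ∀ a b : ℝ, (a • Bmat t + l0 • b • Bmat t) * vecMulVec τ τ *
      (a • Bmat t + l0 • b • Bmat t) = ((a + l0 * b) ^ 2) • vecMulVec τ τ := by
    intro a b
    rw [smul_smul, ← add_smul, smul_mul_assoc, Bmat_mul_V h0, smul_mul_assoc, mul_smul_comm,
      V_mul_Bmat h0, smul_smul, sq]
  rw [hV]
  have ht0 : (t:ℝ) ≠ 0 := by positivity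
  ext i j
  simp only [Rm, Bmat, Matrix.add_apply, Matrix.sub_apply, Matrix.smul_apply, smul_eq_mul]
  generalize (1 : Matrix (Fin t) (Fin t) ℝ) i j = a1
  generalize Jmat t i j = a2
  generalize vecMulVec τ τ i j = a3
  generalize τ ⬝ᵥ τ = r at hdd
  generalize cD n S w 1 1 = c11 at hc
  field_simp
  ring

lemma Nice.crit (hp : 1 ≤ p) (ht : 2 ≤ t) {n : ℕ} {S : Matrix (Fin p) (Fin p) ℝ}
    (hS : S.PosDef) {w : TrtSeq p t → ℝ} (hw : IsDesign w) {g : Measure (Fin t → ℝ)}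
    (hg : IsExchangeablePrior g)
    (h : Nice n S w) (hc : 0 < cD n S w 1 1) (l0 : ℝ) (hq : n * qD S w l0 ≠ 0) :
    PhiAdmissible n S PhiD g l0 w ∧
    PhiCrit n S PhiD g l0 w = ((n * qD S w l0 / ((t:ℝ) - 1)) ^ (t - 2) *
      (n * qD S w (xD n S w) / ((t:ℝ) - 1))) ^ (((t : ℝ) - 1)⁻¹) := by
  have := hg.1
  have hae : (fun τ => PhiD (CInfo n S w τ l0)) =ᵐ[g] fun _ =>
      ((n * qD S w l0 / ((t:ℝ) - 1)) ^ (t - 2) *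
      (n * qD S w (xD n S w) / ((t:ℝ) - 1))) ^ (((t : ℝ) - 1)⁻¹) := by
    filter_upwards [prior_ae hg] with τ hτ
    exact h.PhiD_CInfo hp ht hS hw hc l0 hq hτ.1 hτ.2
  refine ⟨⟨hw, ?_, ?_⟩, ?_⟩
  · filter_upwards [prior_ae hg] with τ hτ
    exact (h.pos ht hc hτ.1 hτ.2).2
  · exact (integrable_congr hae).2 (integrable_const _)
  · rw [PhiCrit, integral_congr_ae hae]; simp

lemma const_rows_mul_Bmat (ht : 1 ≤ t) {M : Matrix (Fin p) (Fin t) ℝ}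
    (h : ∀ k i j, M k i = M k j) : M * Bmat t = 0 := by
  have e : M = vecMulVec (fun k => M k ⟨0, ht⟩) (fun _ => 1) := by
    ext k i; simp [vecMulVec_apply]; exact h _ _ _
  have h2 : (fun _ => (1:ℝ)) ᵥ* Bmat t = 0 := by
    rw [← Bmat_transpose, vecMul_transpose, Bmat_mulVec_one ht]
  rw [e, vecMulVec_mul, h2]
  ext k i; simp [vecMulVec_apply]

lemma Ubar_eq (w : TrtSeq p t → ℝ) (i : Fin 2) :
    Ubar w i = (∑ s, w s • Gmat i s) * Bmat t := by
  simp only [Ubar, Um, Matrix.sum_mul, Matrix.smul_mul]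

lemma pseudo_nice (ht : 2 ≤ t) {n : ℕ} {S : Matrix (Fin p) (Fin p) ℝ} {w : TrtSeq p t → ℝ}
    (h : IsPseudoSymmetric n S w) : Nice n S w := by
  have htp : (0:ℝ) < (t:ℝ) - 1 := by
    have : (2:ℝ) ≤ t := by exact_mod_cast ht
    linarith
  have ht1 : 1 ≤ t := by omega
  have ht0 : (t:ℝ) ≠ 0 := by positivity
  have hU : ∀ i, Ubar w i = 0 := by
    intro i
    rw [Ubar_eq]
    apply const_rows_mul_Bmat ht1
    have hT : ∀ k l, (∑ s, w s * (if s k = l then (1:ℝ) else 0)) = 1 / t := by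
      intro k l
      rw [← h.1 k l, Finset.sum_filter]
      simp
    intro k l m
    simp only [Matrix.sum_apply, Matrix.smul_apply, smul_eq_mul, Gmat]
    split_ifs with hi
    · simp only [Tmat, Matrix.of_apply, hT]
    · simp only [Fmat, Matrix.of_apply]
      split_ifs with hk
      · rfl
      · rw [hT, hT]
  refine ⟨hU, fun i j => ?_⟩
  have hCD : _root_.CD n S w i j = ChatD n S w i j := by rw [CD_eq, hU i]; simp
  obtain ⟨a, b, hab⟩ := h.2 i j
  have h1 := ChatD_mulVec_one ht1 n S w i j
  rw [hCD] at hab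
  rw [cD, hab]
  rw [hab] at h1
  have h2 : a + b * t = 0 := by
    have := congrFun h1 ⟨0, ht1⟩
    rw [add_mulVec, smul_mulVec, one_mulVec, smul_mulVec] at this
    simpa [Jmat, mulVec, dotProduct] using this
  have h3 : a = -(b * t) := by linarith
  have htr : (Jmat t).trace = t := by simp [Jmat, trace]
  rw [trace_add, trace_smul, trace_smul, trace_one, htr, Fintype.card_fin, h3]
  ext k l
  simp only [Bmat, Matrix.add_apply, Matrix.sub_apply, Matrix.smul_apply, smul_eq_mul]
  generalize (1 : Matrix (Fin t) (Fin t) ℝ) k l = a1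
  generalize Jmat t k l = a2
  field_simp
  ring

/-- Uniform design over all relabellings of `s`. -/
def symS (s : TrtSeq p t) : TrtSeq p t → ℝ := fun s' =>
  (Fintype.card (Equiv.Perm (Fin t)) : ℝ)⁻¹ *
    ∑ σ : Equiv.Perm (Fin t), if permSeq σ s = s' then 1 else 0

lemma symS_sum {M : Type*} [AddCommGroup M] [Module ℝ M] (s : TrtSeq p t) (f : TrtSeq p t → M) :
    ∑ s', symS s s' • f s' = (Fintype.card (Equiv.Perm (Fin t)) : ℝ)⁻¹ •
      ∑ σ : Equiv.Perm (Fin t), f (permSeq σ s) := by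
  simp only [symS, mul_smul, ← Finset.smul_sum, Finset.sum_smul]
  rw [Finset.sum_comm]
  simp [ite_smul]

lemma symS_design (s : TrtSeq p t) : IsDesign (symS s) := by
  constructor
  · intro s'
    refine mul_nonneg (by positivity) (Finset.sum_nonneg fun σ _ => ?_)
    split_ifs <;> norm_num
  · have := symS_sum s (fun _ => (1:ℝ))
    simp only [smul_eq_mul, mul_one] at this
    rw [this]
    simp only [Finset.sum_const, Finset.card_univ, nsmul_eq_mul, mul_one]
    exact inv_mul_cancel₀ (by positivity)

lemma Gmat_perm (i : Fin 2) (σ : Equiv.Perm (Fin t)) (s : TrtSeq p t) :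
    Gmat i (permSeq σ s) = (Gmat i s).submatrix id σ.symm := by
  ext k l
  simp only [Gmat, Matrix.submatrix_apply]
  split_ifs
  · simp [Tmat, permSeq, ← Equiv.eq_symm_apply]
  · simp [Fmat, permSeq, ← Equiv.eq_symm_apply]

lemma Bmat_perm (σ : Equiv.Perm (Fin t)) : (Bmat t).submatrix σ σ = Bmat t := by
  ext k l
  simp [Bmat, Jmat, Matrix.one_apply]

lemma Um_perm (i : Fin 2) (σ : Equiv.Perm (Fin t)) (s : TrtSeq p t) :
    Um i (permSeq σ s) = (Um i s).submatrix id σ.symm := by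
  rw [Um, Gmat_perm, Um]
  conv_lhs => rw [← Bmat_perm σ.symm]
  rw [Matrix.submatrix_mul_equiv]

lemma Chat_perm (S : Matrix (Fin p) (Fin p) ℝ) (σ : Equiv.Perm (Fin t)) (s : TrtSeq p t)
    (i j : Fin 2) : Chat S (permSeq σ s) i j = (Chat S s i j).submatrix σ.symm σ.symm := by
  rw [Chat_eq, Chat_eq, Um_perm, Um_perm]
  ext k l
  simp [Matrix.mul_apply]

lemma cseq_perm (S : Matrix (Fin p) (Fin p) ℝ) (σ : Equiv.Perm (Fin t)) (s : TrtSeq p t)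
    (i j : Fin 2) : cseq S (permSeq σ s) i j = cseq S s i j := by
  rw [cseq, Chat_perm, cseq]
  simp only [trace, diag, Matrix.submatrix_apply]
  exact Equiv.sum_comp σ.symm (fun k => Chat S s i j k k)

lemma cD_symS (n : ℕ) (S : Matrix (Fin p) (Fin p) ℝ) (s : TrtSeq p t) (i j : Fin 2) :
    cD n S (symS s) i j = n * cseq S s i j := by
  rw [cD_eq]
  congr 1
  have := symS_sum s (fun s' => cseq S s' i j)
  simp only [smul_eq_mul, cseq_perm] at this
  rw [this, Finset.sum_const, nsmul_eq_mul, Finset.card_univ, inv_mul_cancel_left₀]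
  positivity

lemma symS_nice (ht : 2 ≤ t) (n : ℕ) (S : Matrix (Fin p) (Fin p) ℝ) (s : TrtSeq p t) :
    Nice n S (symS s) := by
  have ht1 : 1 ≤ t := by omega
  constructor
  · intro i
    rw [Ubar_eq, symS_sum]
    apply const_rows_mul_Bmat ht1
    intro k l m
    simp only [Matrix.smul_apply, Matrix.sum_apply, Gmat_perm, Matrix.submatrix_apply, id]
    congr 1
    rw [← Equiv.sum_comp (Equiv.mulLeft (Equiv.swap l m))]
    refine Finset.sum_congr rfl fun σ _ => ?_
    congr 1
    simp [Equiv.Perm.mul_def]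
  · intro i j
    refine eq_smul_Bmat ht ?_ ?_
    · intro a b k l
      simp only [ChatD, symS_sum, Matrix.smul_apply, Matrix.sum_apply, Chat_perm,
        Matrix.submatrix_apply]
      congr 2
      rw [← Equiv.sum_comp (Equiv.mulLeft (Equiv.swap a b))]
      refine Finset.sum_congr rfl fun σ _ => ?_
      simp [Equiv.Perm.mul_def]
    · intro k
      have := congrFun (ChatD_mulVec_one ht1 n S (symS s) i j) k
      simpa [mulVec, dotProduct] using this

/-- Mixture of designs. -/
def mix (e : ℝ) (w v : TrtSeq p t → ℝ) : TrtSeq p t → ℝ := fun s => (1 - e) * w s + e * v s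

lemma mix_sum {M : Type*} [AddCommGroup M] [Module ℝ M] (e : ℝ) (w v : TrtSeq p t → ℝ)
    (f : TrtSeq p t → M) :
    ∑ s, mix e w v s • f s = (1 - e) • ∑ s, w s • f s + e • ∑ s, v s • f s := by
  simp only [mix, add_smul, mul_smul, Finset.sum_add_distrib, Finset.smul_sum]

lemma mix_design {e : ℝ} (h0 : 0 ≤ e) (h1 : e ≤ 1) {w v : TrtSeq p t → ℝ} (hw : IsDesign w)
    (hv : IsDesign v) : IsDesign (mix e w v) := by
  constructor
  · intro s
    have := hw.1 s
    have := hv.1 s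
    have : 0 ≤ 1 - e := by linarith
    unfold mix
    positivity
  · have := mix_sum e w v (fun _ => (1:ℝ))
    simp only [smul_eq_mul, mul_one] at this
    rw [this, hw.2, hv.2]; ring

lemma mix_cD (e : ℝ) (n : ℕ) (S : Matrix (Fin p) (Fin p) ℝ) (w v : TrtSeq p t → ℝ)
    (i j : Fin 2) : cD n S (mix e w v) i j = (1 - e) * cD n S w i j + e * cD n S v i j := by
  have := mix_sum e w v (fun s => cseq S s i j)
  simp only [smul_eq_mul] at this
  rw [cD_eq, cD_eq, cD_eq, this]; ring

lemma mix_qD (e : ℝ) (S : Matrix (Fin p) (Fin p) ℝ) (w v : TrtSeq p t → ℝ)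
    (x : ℝ) : qD S (mix e w v) x = (1 - e) * qD S w x + e * qD S v x := by
  have := mix_sum e w v (fun s => qSeq S s x)
  simpa only [smul_eq_mul, qD] using this

lemma mix_nice (e : ℝ) {n : ℕ} {S : Matrix (Fin p) (Fin p) ℝ} {w v : TrtSeq p t → ℝ}
    (hw : Nice n S w) (hv : Nice n S v) : Nice n S (mix e w v) := by
  constructor
  · intro i
    rw [Ubar, mix_sum]
    have h1 := hw.1 i
    have h2 := hv.1 i
    rw [Ubar] at h1 h2
    rw [h1, h2]; simp
  · intro i j
    have h1 := hw.2 i j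
    have h2 := hv.2 i j
    rw [ChatD] at h1 h2
    rw [ChatD, mix_sum, smul_add, smul_comm, h1, smul_comm (n:ℝ) e, h2, mix_cD, smul_smul,
      smul_smul, ← add_smul]
    congr 1
    ring

lemma qD_symS (S : Matrix (Fin p) (Fin p) ℝ) (s : TrtSeq p t) (x : ℝ) :
    qD S (symS s) x = qSeq S s x := by
  have := n_qD 1 S (symS s) x
  simp only [cD_symS, Nat.cast_one, one_mul] at this
  rw [this, qSeq]

end designs

/-- First-order improvement along a mixture. -/
lemma improve (m : ℕ) {c00 c01 c11 e00 e01 e11 A A' k : ℝ} (hk : 0 < k) (hc : 0 < c11)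
    (hA : 0 < A) (hB : 0 < c00 - c01 ^ 2 / c11)
    (h : (m:ℝ) + 1 < (e00 + 2 * e01 * (-c01 / c11) + e11 * (-c01 / c11) ^ 2) /
      (c00 - c01 ^ 2 / c11) + m * (A' / A)) :
    ∃ e : ℝ, 0 ≤ e ∧ e ≤ 1 ∧ 0 < (1 - e) * c11 + e * e11 ∧ 0 < (1 - e) * A + e * A' ∧
      (A / k) ^ m * ((c00 - c01 ^ 2 / c11) / k) <
      (((1 - e) * A + e * A') / k) ^ m * ((((1 - e) * c00 + e * e00) -
        ((1 - e) * c01 + e * e01) ^ 2 / ((1 - e) * c11 + e * e11)) / k) := by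
  have hlin : ∀ a b : ℝ, HasDerivAt (fun e : ℝ => (1 - e) * a + e * b) (b - a) 0 := by
    intro a b
    have h1 : HasDerivAt (fun e : ℝ => e * (b - a) + a) (1 * (b - a)) 0 :=
      ((hasDerivAt_id (0:ℝ)).mul_const (b - a)).add_const a
    rw [one_mul] at h1
    refine h1.congr_of_eventuallyEq (Filter.Eventually.of_forall fun e => ?_)
    simp only
    ring
  have hA1 := ((hlin A A').div_const k).pow m
  have hne : (1 - (0:ℝ)) * c11 + 0 * e11 ≠ 0 := by simpa using hc.ne'
  have hB1 := ((hlin c00 e00).sub (((hlin c01 e01).pow 2).div (hlin c11 e11) hne)).div_const k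
  have hF := hA1.mul hB1
  set B := c00 - c01 ^ 2 / c11 with hBdef
  have hpos : 0 < m * (A / k) ^ (m - 1) * ((A' - A) / k) * (B / k) + (A / k) ^ m *
      (((e00 - c00) - (2 * c01 * (e01 - c01) * c11 - c01 ^ 2 * (e11 - c11)) / c11 ^ 2) / k) := by
    set B' := e00 + 2 * e01 * (-c01 / c11) + e11 * (-c01 / c11) ^ 2 with hB'
    have e1 : (e00 - c00) - (2 * c01 * (e01 - c01) * c11 - c01 ^ 2 * (e11 - c11)) / c11 ^ 2 =
        B' - B := by
      rw [hB', hBdef]; field_simp; ring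
    rw [e1]
    have e2 : m * (A / k) ^ (m - 1) * ((A' - A) / k) * (B / k) + (A / k) ^ m * ((B' - B) / k) =
        (A / k) ^ m * (B / k) * (B' / B + m * (A' / A) - (m + 1)) := by
      rcases m with _ | m
      · simp; field_simp
      · rw [Nat.add_sub_cancel, pow_succ]; field_simp; ring
    rw [e2]
    have : 0 < B' / B + m * (A' / A) - (m + 1) := by linarith
    positivity
  have hslope := (hasDerivAt_iff_tendsto_slope.1 hF)
  have hev := hslope.eventually_const_lt (u := 0) (by
    refine lt_of_lt_of_eq hpos ?_
    simp [hBdef])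
  have hev1 := hev.filter_mono (nhdsWithin_mono 0
    (show Set.Ioi (0:ℝ) ⊆ {0}ᶜ from fun x hx => ne_of_gt hx))
  have hcA : ∀ᶠ e in nhdsWithin (0:ℝ) (Set.Ioi 0), 0 < (1 - e) * A + e * A' :=
    ((hlin A A').continuousAt.eventually_const_lt (by simpa using hA)).filter_mono
      nhdsWithin_le_nhds
  have hcC : ∀ᶠ e in nhdsWithin (0:ℝ) (Set.Ioi 0), 0 < (1 - e) * c11 + e * e11 :=
    ((hlin c11 e11).continuousAt.eventually_const_lt (by simpa using hc)).filter_mono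
      nhdsWithin_le_nhds
  have hlt : ∀ᶠ e in nhdsWithin (0:ℝ) (Set.Ioi 0), e ∈ Set.Ioo (0:ℝ) 1 :=
    Ioo_mem_nhdsGT one_pos
  obtain ⟨e, he, heA, heC, hee⟩ := (hev1.and (hcA.and (hcC.and hlt))).exists
  refine ⟨e, hee.1.le, hee.2.le, heC, heA, ?_⟩
  rw [slope_def_field, sub_zero, lt_div_iff₀ hee.1, zero_mul, sub_pos] at he
  simpa using he


/-- equivalence theorem for the D-criterion. -/
theorem stmt12 (p t n : ℕ) (hp : 2 ≤ p) (ht : 3 ≤ t) (hn : 1 ≤ n)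
    (S : Matrix (Fin p) (Fin p) ℝ) (hS : S.PosDef)
    (l0 : ℝ) (g : Measure (Fin t → ℝ)) (hg : IsExchangeablePrior g)
    (w : TrtSeq p t → ℝ) (hw : IsDesign w) (hps : IsPseudoSymmetric n S w)
    (hc22 : 0 < cD n S w 1 1)
    (hq1 : 0 < qD S w (xD n S w)) (hq2 : 0 < qD S w l0) :
    (PhiOptimal n S PhiD g l0 w ↔
      sSup (Set.range fun s : TrtSeq p t =>
        (1 / ((t : ℝ) - 1)) * (qSeq S s (xD n S w) / qD S w (xD n S w)) +
          (((t : ℝ) - 2) / ((t : ℝ) - 1)) * (qSeq S s l0 / qD S w l0)) = 1) ∧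
    (PhiOptimal n S PhiD g l0 w → ∀ s : TrtSeq p t, 0 < w s →
      (1 / ((t : ℝ) - 1)) * (qSeq S s (xD n S w) / qD S w (xD n S w)) +
        (((t : ℝ) - 2) / ((t : ℝ) - 1)) * (qSeq S s l0 / qD S w l0) = 1) := by
  obtain ⟨m, rfl⟩ : ∃ m, t = m + 2 := ⟨t - 2, by omega⟩
  have ht2 : 2 ≤ m + 2 := by omega
  have hp1 : 1 ≤ p := by omega
  have hnpos : (0:ℝ) < n := by exact_mod_cast hn
  have hcast : ((m + 2 : ℕ) : ℝ) = (m:ℝ) + 2 := by push_cast; ring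
  have hk : (0:ℝ) < ((m + 2 : ℕ) : ℝ) - 1 := by
    rw [hcast]; have : (0:ℝ) ≤ m := Nat.cast_nonneg m
    linarith
  have hnice := pseudo_nice ht2 hps
  have hA : 0 < n * qD S w l0 := by positivity
  have hB : 0 < n * qD S w (xD n S w) := by positivity
  obtain ⟨-, hcrit⟩ := hnice.crit hp1 ht2 hS hw hg hc22 l0 hA.ne'
  set k := ((m + 2 : ℕ) : ℝ) - 1 with hkdef
  have hk1 : k = m + 1 := by rw [hkdef, hcast]; ring
  have hk2 : ((m + 2 : ℕ) : ℝ) - 2 = m := by rw [hcast]; ring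
  rw [hk2]
  set psi : TrtSeq p (m + 2) → ℝ := fun s =>
    (1 / k) * (qSeq S s (xD n S w) / qD S w (xD n S w)) +
      (m / k) * (qSeq S s l0 / qD S w l0) with hpsi
  have havg : ∀ v : TrtSeq p (m + 2) → ℝ, ∑ s, v s * psi s =
      (1 / k) * (qD S v (xD n S w) / qD S w (xD n S w)) + (m / k) * (qD S v l0 / qD S w l0) := by
    intro v
    simp only [hpsi, qD, mul_add, Finset.sum_add_distrib, Finset.sum_div, Finset.mul_sum]
    congr 1 <;> exact Finset.sum_congr rfl fun s _ => by ring
  have havg1 : ∑ s, w s * psi s = 1 := by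
    rw [havg, div_self hq1.ne', div_self hq2.ne', hk1]
    have : (0:ℝ) < m + 1 := by positivity
    field_simp
    ring
  have hsuff : (∀ s, psi s ≤ 1) → PhiOptimal n S PhiD g l0 w := by
    intro hle w' hw'
    have hub := PhiCrit_le hp1 ht2 n hS l0 (xD n S w) hg hw' (div_pos hA hk) (div_pos hB hk)
    rw [hcrit]
    refine hub.trans ?_
    refine mul_le_of_le_one_right (Real.rpow_nonneg (by positivity) _) ?_
    have h1 : ∑ s, w' s * psi s ≤ 1 := by
      rw [← hw'.1.2]
      exact Finset.sum_le_sum fun s _ => mul_le_of_le_one_right (hw'.1.1 s) (hle s)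
    rw [havg] at h1
    refine le_trans (le_of_eq ?_) h1
    rw [← hkdef]
    have : (m:ℝ) = k - 1 := by rw [hk1]; ring
    rw [this]
    clear_value k
    field_simp
    ring
  have hnec : PhiOptimal n S PhiD g l0 w → ∀ s, psi s ≤ 1 := by
    intro hopt s
    by_contra hgt
    push Not at hgt
    have hBeq := n_qD_xD n S w hc22
    have hqs : n * qSeq S s (xD n S w) = cD n S (symS s) 0 0 +
        2 * cD n S (symS s) 0 1 * (-(cD n S w 0 1) / cD n S w 1 1) +
        cD n S (symS s) 1 1 * (-(cD n S w 0 1) / cD n S w 1 1) ^ 2 := by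
      rw [← qD_symS, n_qD]; rfl
    obtain ⟨e, he0, he1, heC, heA, hlt⟩ := improve m (c00 := cD n S w 0 0) (c01 := cD n S w 0 1)
      (c11 := cD n S w 1 1) (e00 := cD n S (symS s) 0 0) (e01 := cD n S (symS s) 0 1)
      (e11 := cD n S (symS s) 1 1) (A := n * qD S w l0) (A' := n * qSeq S s l0) hk hc22 hA
      (by rw [← hBeq]; exact hB)
      (by
        rw [← hBeq, ← hqs, mul_div_mul_left _ _ hnpos.ne', mul_div_mul_left _ _ hnpos.ne']
        simp only [hpsi] at hgt
        rw [← hk1]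
        have h2 := mul_lt_mul_of_pos_left hgt hk
        rw [mul_one] at h2
        refine h2.trans_eq ?_
        clear_value k
        field_simp)
    have hmc := mix_cD e n S w (symS s)
    have hmA : n * qD S (mix e w (symS s)) l0 = (1 - e) * (n * qD S w l0) +
        e * (n * qSeq S s l0) := by
      rw [mix_qD, qD_symS]; ring
    have hmd := mix_design he0 he1 hw (symS_design s)
    have hmn := mix_nice e hnice (symS_nice ht2 n S s)
    have hc' : 0 < cD n S (mix e w (symS s)) 1 1 := by rw [hmc]; exact heC
    obtain ⟨hadm, hcr⟩ := hmn.crit hp1 ht2 hS hmd hg hc' l0 (by rw [hmA]; exact heA.ne')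
    have hle := hopt _ hadm
    rw [hcr, hcrit, n_qD_xD _ _ _ hc', hmA, hmc, hmc, hmc, n_qD_xD n S w hc22] at hle
    refine absurd hle (not_le.2 (Real.rpow_lt_rpow ?_ hlt (by positivity)))
    rw [← n_qD_xD n S w hc22]
    positivity
  have hne : (Set.range psi).Nonempty := ⟨_, ⟨fun _ => 0, rfl⟩⟩
  have hbdd : BddAbove (Set.range psi) := (Set.finite_range psi).bddAbove
  have hsup : (∀ s, psi s ≤ 1) ↔ sSup (Set.range psi) = 1 := by
    constructor
    · intro h
      refine le_antisymm (csSup_le hne (by rintro _ ⟨s, rfl⟩; exact h s)) ?_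
      rw [← havg1]
      calc ∑ s, w s * psi s ≤ ∑ s, w s * sSup (Set.range psi) :=
            Finset.sum_le_sum fun s _ =>
              mul_le_mul_of_nonneg_left (le_csSup hbdd ⟨s, rfl⟩) (hw.1 s)
        _ = _ := by rw [← Finset.sum_mul, hw.2, one_mul]
    · intro h s
      rw [← h]
      exact le_csSup hbdd ⟨s, rfl⟩
  refine ⟨⟨fun h => hsup.1 (hnec h), fun h => hsuff (hsup.2 h)⟩, fun hopt s hs => ?_⟩
  have hle := hnec hopt
  have hz : ∑ s, w s * (1 - psi s) = 0 := by
    simp only [mul_sub, mul_one, Finset.sum_sub_distrib, havg1, hw.2, sub_self]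
  have h0 := (Finset.sum_eq_zero_iff_of_nonneg
    (fun s _ => mul_nonneg (hw.1 s) (sub_nonneg.2 (hle s)))).1 hz s (Finset.mem_univ s)
  rcases mul_eq_zero.1 h0 with h | h
  · exact absurd h hs.ne'
  · change psi s = 1
    linarith
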